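/- arXiv:1911.12432 — 8 statements merged into one kernel-verified Lean document; each statement's English description precedes it below -/
import Mathlib

section
/- Suppose s ∈ S has degree at least 2d and st is a minimum-weight edge incident to s. Then for every perfect d-distance matching M of G there exists a perfect d-distance matching M' of G with st ∉ M' and w(M') ≥ w(M); consequently, deleting st from E does not change the maximum weight of a perfect d-distance matching. -/
open Finset

/-- `M` is a `d`-distance matching of the bipartite graph with left node set `Fin n`
(ordered) and right node set `T`, whose edge set is `E`. -/
def DDM {n : ℕ} {T : Type*} [DecidableEq T] (d : ℕ) (E M : Finset (Fin n × T)) : Prop :=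
  M ⊆ E ∧ (∀ e ∈ M, ∀ f ∈ M, e.1 = f.1 → e = f) ∧
    (∀ e ∈ M, ∀ f ∈ M, e.2 = f.2 → e ≠ f → d ≤ Nat.dist e.1.val f.1.val)

/-- A perfect `d`-distance matching covers every node of `S = Fin n`. -/
def PerfectDDM {n : ℕ} {T : Type*} [DecidableEq T] (d : ℕ) (E M : Finset (Fin n × T)) : Prop :=
  DDM d E M ∧ ∀ i : Fin n, ∃ t, (i, t) ∈ M

theorem stmt1_aux {n : ℕ} {T : Type*} [DecidableEq T]
    (d : ℕ) (hd : 1 ≤ d) (E : Finset (Fin n × T)) (w : Fin n × T → ℝ)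
    (s : Fin n) (t : T)
    (hdeg : 2 * d ≤ (E.filter (fun e => e.1 = s)).card)
    (hmin : ∀ e ∈ E, e.1 = s → w (s, t) ≤ w e) :
    ∀ M, PerfectDDM d E M → ∃ M', PerfectDDM d E M' ∧ (s, t) ∉ M' ∧
      ∑ e ∈ M, w e ≤ ∑ e ∈ M', w e := by
  rintro M ⟨⟨hsub, hfun, hdist⟩, hcov⟩
  by_cases hM : (s, t) ∈ M
  swap
  · exact ⟨M, ⟨⟨hsub, hfun, hdist⟩, hcov⟩, hM, le_rfl⟩
  set N := M.filter (fun e => Nat.dist e.1.val s.val < d) with hN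
  have hNc : N.card ≤ 2 * d - 1 := by
    have h1 : N.card ≤ (Finset.Ico (s.val + 1 - d) (s.val + d)).card := by
      apply Finset.card_le_card_of_injOn (fun e => e.1.val)
      · intro e he
        have := (Finset.mem_filter.1 he).2
        simp only [Nat.dist] at this
        simp only [Finset.coe_Ico, Set.mem_Ico]
        omega
      · intro e he f hf hef
        exact hfun e (Finset.mem_filter.1 he).1 f (Finset.mem_filter.1 hf).1 (Fin.ext hef)
    rw [Nat.card_Ico] at h1
    omega
  have hA : ((E.filter (fun e => e.1 = s)).image Prod.snd).card
      = (E.filter (fun e => e.1 = s)).card := by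
    apply Finset.card_image_of_injOn
    intro e he f hf hef
    exact Prod.ext ((Finset.mem_filter.1 he).2.trans (Finset.mem_filter.1 hf).2.symm) hef
  have hB : (N.image Prod.snd).card ≤ N.card := Finset.card_image_le
  obtain ⟨t', ht', hn⟩ := Finset.exists_mem_notMem_of_card_lt_card
    (s := N.image Prod.snd) (t := (E.filter (fun e => e.1 = s)).image Prod.snd) (by omega)
  have ht'E : (s, t') ∈ E := by
    obtain ⟨⟨a, b⟩, he, rfl⟩ := Finset.mem_image.1 ht'
    obtain ⟨h1, h2⟩ := Finset.mem_filter.1 he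
    simp only at h2
    subst h2
    exact h1
  have hfree : ∀ e ∈ M, e.2 = t' → d ≤ Nat.dist e.1.val s.val := by
    intro e he h2
    by_contra hlt
    exact hn (Finset.mem_image.2 ⟨e, Finset.mem_filter.2 ⟨he, not_le.1 hlt⟩, h2⟩)
  have hself : Nat.dist s.val s.val = 0 := Nat.dist_self _
  have htt : t ≠ t' := by
    intro h
    have := hfree _ hM h
    simp only [hself] at this
    omega
  have hnotM : (s, t') ∉ M := by
    intro h
    have := hfree _ h rfl
    simp only [hself] at this
    omega
  refine ⟨insert (s, t') (M.erase (s, t)), ⟨⟨?_, ?_, ?_⟩, ?_⟩, ?_, ?_⟩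
  · intro e he
    rcases Finset.mem_insert.1 he with rfl | he
    · exact ht'E
    · exact hsub (Finset.mem_of_mem_erase he)
  · intro e he f hf hef
    rcases Finset.mem_insert.1 he with rfl | he <;> rcases Finset.mem_insert.1 hf with rfl | hf
    · rfl
    · exact absurd (hfun _ hM _ (Finset.mem_of_mem_erase hf) hef).symm (Finset.ne_of_mem_erase hf)
    · exact absurd (hfun _ (Finset.mem_of_mem_erase he) _ hM hef) (Finset.ne_of_mem_erase he)
    · exact hfun _ (Finset.mem_of_mem_erase he) _ (Finset.mem_of_mem_erase hf) hef
  · intro e he f hf hef hne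
    rcases Finset.mem_insert.1 he with rfl | he <;> rcases Finset.mem_insert.1 hf with rfl | hf
    · exact absurd rfl hne
    · rw [Nat.dist_comm]
      exact hfree _ (Finset.mem_of_mem_erase hf) hef.symm
    · exact hfree _ (Finset.mem_of_mem_erase he) hef
    · exact hdist _ (Finset.mem_of_mem_erase he) _ (Finset.mem_of_mem_erase hf) hef hne
  · intro i
    by_cases hi : i = s
    · subst hi
      exact ⟨t', Finset.mem_insert_self _ _⟩
    · obtain ⟨u, hu⟩ := hcov i
      refine ⟨u, Finset.mem_insert_of_mem (Finset.mem_erase.2 ⟨?_, hu⟩)⟩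
      intro h
      exact hi (congrArg Prod.fst h)
  · intro h
    rcases Finset.mem_insert.1 h with h | h
    · exact htt (congrArg Prod.snd h)
    · exact Finset.notMem_erase _ _ h
  · rw [Finset.sum_insert (fun h => hnotM (Finset.mem_of_mem_erase h)),
      ← Finset.add_sum_erase M w hM]
    have := hmin _ ht'E rfl
    linarith

/-- If `s` has degree at least `2d` and `st` is a minimum-weight edge at `s`, then every
perfect `d`-distance matching can be replaced by one avoiding `st` of no smaller weight;
consequently, deleting `st` does not change the maximum weight of a perfect `d`-distance
matching. -/
theorem stmt1 {n : ℕ} {T : Type*} [DecidableEq T]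
    (d : ℕ) (hd : 1 ≤ d) (E : Finset (Fin n × T)) (w : Fin n × T → ℝ)
    (hw : ∀ e ∈ E, 0 ≤ w e)
    (s : Fin n) (t : T) (hst : (s, t) ∈ E)
    (hdeg : 2 * d ≤ (E.filter (fun e => e.1 = s)).card)
    (hmin : ∀ e ∈ E, e.1 = s → w (s, t) ≤ w e) :
    (∀ M, PerfectDDM d E M → ∃ M', PerfectDDM d E M' ∧ (s, t) ∉ M' ∧
      ∑ e ∈ M, w e ≤ ∑ e ∈ M', w e) ∧
    (∀ M, PerfectDDM d E M → ∃ M', PerfectDDM d (E.erase (s, t)) M' ∧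
      ∑ e ∈ M, w e ≤ ∑ e ∈ M', w e) := by
  have key := stmt1_aux d hd E w s t hdeg hmin
  refine ⟨key, fun M hM => ?_⟩
  obtain ⟨M', ⟨⟨hsub, hfun, hdist⟩, hcov⟩, hn, hle⟩ := key M hM
  exact ⟨M', ⟨⟨Finset.subset_erase.2 ⟨hsub, hn⟩, hfun, hdist⟩, hcov⟩, hle⟩
end

section
/- For every d-distance matching M and every edge e* = s_i t ∈ E, there is a unique inclusion-wise minimal subset H(e*,M) ⊆ M such that (M ∖ H(e*,M)) ∪ {e*} is a d-distance matching; namely H(e*,M) consists of the edges of M incident to s_i together with the edges s_j t ∈ M with 0 < |j−i| < d, and consequently |H(e*,M)| ≤ 3 (at most one edge at s_i and at most two edges s_j t with s_j ∈ L_d(s_i)∪R_d(s_i)). -/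
open Finset

/-- For a `d`-distance matching `M` and an edge `e* = (i, t) ∈ E ∖ M`, the set
`H = {f ∈ M : f is incident to s_i, or f = s_j t with 0 < |j − i| < d}` satisfies:
`(M ∖ H) ∪ {e*}` is a `d`-distance matching, `H` is contained in every `H' ⊆ M` with
`(M ∖ H') ∪ {e*}` a `d`-distance matching (hence `H` is the unique inclusion-wise
minimal such set), and `|H| ≤ 3`. -/
theorem stmt3 {n : ℕ} {T : Type*} [DecidableEq T]
    (d : ℕ) (hd : 1 ≤ d) (E M : Finset (Fin n × T)) (hM : DDM d E M)
    (i : Fin n) (t : T) (heE : (i, t) ∈ E) (heM : (i, t) ∉ M)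
    (H : Finset (Fin n × T))
    (hH : H = M.filter
      (fun f => f.1 = i ∨ (f.2 = t ∧ f.1 ≠ i ∧ Nat.dist f.1.val i.val < d))) :
    DDM d E ((M \ H) ∪ {(i, t)}) ∧
    (∀ H' ⊆ M, DDM d E ((M \ H') ∪ {(i, t)}) → H ⊆ H') ∧
    H.card ≤ 3 := by
  obtain ⟨hE, h1, h2⟩ := hM
  have mem : ∀ f, f ∈ H ↔ f ∈ M ∧
      (f.1 = i ∨ (f.2 = t ∧ f.1 ≠ i ∧ Nat.dist f.1.val i.val < d)) := by
    intro f
    rw [hH, Finset.mem_filter]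
  refine ⟨⟨?_, ?_, ?_⟩, ?_, ?_⟩
  · intro f hf
    simp only [Finset.mem_union, Finset.mem_sdiff, Finset.mem_singleton] at hf
    rcases hf with hf | rfl
    · exact hE hf.1
    · exact heE
  · intro e he f hf hef
    simp only [Finset.mem_union, Finset.mem_sdiff, Finset.mem_singleton, mem] at he hf
    rcases he with he | rfl <;> rcases hf with hf | rfl
    · exact h1 e he.1 f hf.1 hef
    · exact absurd ⟨he.1, Or.inl hef⟩ he.2
    · exact absurd ⟨hf.1, Or.inl hef.symm⟩ hf.2
    · rfl
  · intro e he f hf hef hne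
    simp only [Finset.mem_union, Finset.mem_sdiff, Finset.mem_singleton, mem] at he hf
    rcases he with he | rfl <;> rcases hf with hf | rfl
    · exact h2 e he.1 f hf.1 hef hne
    · by_contra hc
      refine he.2 ⟨he.1, ?_⟩
      by_cases h : e.1 = i
      · exact Or.inl h
      · exact Or.inr ⟨hef, h, not_le.mp hc⟩
    · by_contra hc
      refine hf.2 ⟨hf.1, ?_⟩
      by_cases h : f.1 = i
      · exact Or.inl h
      · refine Or.inr ⟨hef.symm, h, ?_⟩
        rw [Nat.dist_comm]
        exact not_le.mp hc
    · exact absurd rfl hne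
  · rintro H' - ⟨-, k1, k2⟩ f hf
    by_contra hc
    obtain ⟨hfM, hf⟩ := (mem f).1 hf
    have hfU : f ∈ (M \ H') ∪ {(i, t)} := by simp [hfM, hc]
    have heU : (i, t) ∈ (M \ H') ∪ {(i, t)} := by simp
    have hne : f ≠ (i, t) := fun h => heM (h ▸ hfM)
    rcases hf with hf | ⟨ht, -, hlt⟩
    · exact hne (k1 f hfU _ heU hf)
    · exact absurd (k2 f hfU _ heU ht hne) (not_le.mpr hlt)
  · have hsub : H ⊆ M.filter (fun f => f.1 = i) ∪
        (M.filter (fun f => f.2 = t ∧ f.1.val < i.val ∧ Nat.dist f.1.val i.val < d) ∪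
         M.filter (fun f => f.2 = t ∧ i.val < f.1.val ∧ Nat.dist f.1.val i.val < d)) := by
      intro f hf
      obtain ⟨hfM, hf⟩ := (mem f).1 hf
      simp only [Finset.mem_union, Finset.mem_filter]
      rcases hf with hf | ⟨ht, hi, hlt⟩
      · exact Or.inl ⟨hfM, hf⟩
      · have : f.1.val ≠ i.val := fun h => hi (Fin.ext h)
        rcases lt_or_gt_of_ne this with h | h
        · exact Or.inr (Or.inl ⟨hfM, ht, h, hlt⟩)
        · exact Or.inr (Or.inr ⟨hfM, ht, h, hlt⟩)
    have cA : (M.filter (fun f => f.1 = i)).card ≤ 1 := by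
      rw [Finset.card_le_one]
      intro a ha b hb
      rw [Finset.mem_filter] at ha hb
      exact h1 a ha.1 b hb.1 (ha.2.trans hb.2.symm)
    have cB : (M.filter (fun f => f.2 = t ∧ f.1.val < i.val ∧
        Nat.dist f.1.val i.val < d)).card ≤ 1 := by
      rw [Finset.card_le_one]
      intro a ha b hb
      rw [Finset.mem_filter] at ha hb
      by_contra hne
      have := h2 a ha.1 b hb.1 (ha.2.1.trans hb.2.1.symm) hne
      obtain ⟨-, -, p, q⟩ := ha
      obtain ⟨-, -, p', q'⟩ := hb
      unfold Nat.dist at *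
      omega
    have cC : (M.filter (fun f => f.2 = t ∧ i.val < f.1.val ∧
        Nat.dist f.1.val i.val < d)).card ≤ 1 := by
      rw [Finset.card_le_one]
      intro a ha b hb
      rw [Finset.mem_filter] at ha hb
      by_contra hne
      have := h2 a ha.1 b hb.1 (ha.2.1.trans hb.2.1.symm) hne
      obtain ⟨-, -, p, q⟩ := ha
      obtain ⟨-, -, p', q'⟩ := hb
      unfold Nat.dist at *
      omega
    have u0 := Finset.card_le_card hsub
    have u1 := u0.trans (Finset.card_union_le _ _)
    have u2 := u1.trans (Nat.add_le_add_left (Finset.card_union_le _ _) _)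
    omega
end

section
/- If M and M* are d-distance matchings of G, then every edge e ∈ M belongs to H(e*,M) for at most three edges e* ∈ M*; consequently Σ_{e*∈M*} |H(e*,M)| ≤ 3|M|. -/
open Finset

/-- The hit set `H(e, M)`: the inclusion-wise minimal subset of the `d`-distance
matching `M` whose removal makes `M ∪ {e}` a feasible `d`-distance matching; explicitly,
the edges of `M` (other than `e` itself) sharing the `S`-node with `e`, together with
the edges of `M` at the same `T`-node whose `S`-node is at distance `< d`. -/
def hitSet {n : ℕ} {T : Type*} [DecidableEq T] (d : ℕ) (M : Finset (Fin n × T))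
    (e : Fin n × T) : Finset (Fin n × T) :=
  (M.filter
    (fun f => f.1 = e.1 ∨ (f.2 = e.2 ∧ f.1 ≠ e.1 ∧ Nat.dist f.1.val e.1.val < d))).erase e

/-- If `M` and `M*` are `d`-distance matchings, then every edge `e ∈ M` lies in
`H(e*, M)` for at most three edges `e* ∈ M*`; consequently
`Σ_{e* ∈ M*} |H(e*, M)| ≤ 3|M|`. -/
theorem stmt4 {n : ℕ} {T : Type*} [DecidableEq T]
    (d : ℕ) (hd : 1 ≤ d) (E M Ms : Finset (Fin n × T))
    (hM : DDM d E M) (hMs : DDM d E Ms) :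
    (∀ e ∈ M, (Ms.filter (fun f => e ∈ hitSet d M f)).card ≤ 3) ∧
    ∑ f ∈ Ms, (hitSet d M f).card ≤ 3 * M.card := by
  have key : ∀ e ∈ M, (Ms.filter (fun f => e ∈ hitSet d M f)).card ≤ 3 := by
    intro e _
    have h3 : (Finset.range 3).card = 3 := Finset.card_range 3
    rw [← h3]
    apply Finset.card_le_card_of_injOn
      (fun f => if f.1.val = e.1.val then 0 else if f.1.val < e.1.val then 1 else 2)
    · intro f _
      simp only [Finset.coe_range, Set.mem_Iio]
      split_ifs <;> omega
    · intro f hf g hg hfg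
      simp only [Finset.coe_filter, Set.mem_setOf_eq, hitSet, Finset.mem_erase,
        Finset.mem_filter, Nat.dist, Fin.ext_iff, ne_eq] at hf hg
      obtain ⟨hfM, -, -, hf⟩ := hf
      obtain ⟨hgM, -, -, hg⟩ := hg
      have h1 := hMs.2.1 f hfM g hgM
      have h2 := hMs.2.2 f hfM g hgM
      simp only [Nat.dist, Fin.ext_iff] at h1 h2
      by_contra hne
      have h1' : ¬ (f.1.val = g.1.val) := fun h => hne (h1 h)
      dsimp only at hfg
      have h4 : e.2 = f.2 → e.2 = g.2 →
          d ≤ f.1.val - g.1.val + (g.1.val - f.1.val) :=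
        fun a b => h2 (a.symm.trans b) hne
      rcases hf with hf | ⟨hf, hf', hf''⟩ <;> rcases hg with hg | ⟨hg, hg', hg''⟩
      · omega
      · split_ifs at hfg <;> omega
      · split_ifs at hfg <;> omega
      · have := h4 hf hg
        split_ifs at hfg <;> omega
  refine ⟨key, ?_⟩
  have hc : ∀ f ∈ Ms, (hitSet d M f).card
      = (Finset.bipartiteAbove (fun f e => e ∈ hitSet d M f) M f).card := by
    intro f _
    congr 1
    ext e
    simp only [Finset.mem_bipartiteAbove]
    constructor
    · intro h
      refine ⟨?_, h⟩
      exact (Finset.mem_filter.1 (Finset.mem_of_mem_erase h)).1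
    · exact fun h => h.2
  rw [Finset.sum_congr rfl hc, Finset.sum_card_bipartiteAbove_eq_sum_card_bipartiteBelow,
    mul_comm, ← smul_eq_mul]
  exact Finset.sum_le_card_nsmul _ _ _ key
end

section
/- The integrality gap of LP1 is at most 2 − 1/(2d−1): for every weight function w : E → ℝ₊, the optimum value of LP1 is at most (2 − 1/(2d−1)) times the maximum weight of a d-distance matching of G. -/
open Finset

/-- `x` is a feasible solution of LP1. -/
def FeasLP1 {n : ℕ} {T : Type*} [DecidableEq T]
    (d : ℕ) (E : Finset (Fin n × T)) (x : Fin n × T → ℝ) : Prop :=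
  (∀ e, 0 ≤ x e) ∧ (∀ e ∉ E, x e = 0) ∧
  (∀ s : Fin n, ∑ e ∈ E.filter (fun e => e.1 = s), x e ≤ 1) ∧
  (∀ s : Fin n, ∀ t : T,
    ∑ e ∈ E.filter (fun e => e.2 = t ∧ s.val ≤ e.1.val ∧ e.1.val < s.val + d), x e ≤ 1)

lemma core_aux {ι A B : Type*} [Fintype A] [Fintype B] [DecidableEq A] [DecidableEq B]
    (F : Finset ι) (p : ι → A) (q : ι → B)
    (hinj : ∀ e ∈ F, ∀ f ∈ F, p e = p f → q e = q f → e = f)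
    (y w : ι → ℝ) (hy : ∀ e ∈ F, 0 ≤ y e)
    (hr : ∀ a, ∑ e ∈ F.filter (fun e => p e = a), y e ≤ 1)
    (hc : ∀ b, ∑ e ∈ F.filter (fun e => q e = b), y e ≤ 1) :
    ∃ M ⊆ F, (∀ e ∈ M, ∀ f ∈ M, p e = p f → e = f) ∧
      (∀ e ∈ M, ∀ f ∈ M, q e = q f → e = f) ∧
      ∑ e ∈ F, w e * y e ≤ ∑ e ∈ M, w e := by
  classical
  let Y : A → B → ℝ := fun a b => ∑ e ∈ F.filter (fun e => p e = a ∧ q e = b), y e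
  have hY0 : ∀ a b, 0 ≤ Y a b := fun a b =>
    Finset.sum_nonneg fun e he => hy e (Finset.mem_filter.1 he).1
  have hrow : ∀ a, ∑ b, Y a b = ∑ e ∈ F.filter (fun e => p e = a), y e := by
    intro a
    rw [← Finset.sum_fiberwise (F.filter (fun e => p e = a)) q y]
    simp only [Y, Finset.filter_filter]
  have hcol : ∀ b, ∑ a, Y a b = ∑ e ∈ F.filter (fun e => q e = b), y e := by
    intro b
    rw [← Finset.sum_fiberwise (F.filter (fun e => q e = b)) p y]
    simp only [Y, Finset.filter_filter, and_comm]
  have hYe : ∀ e ∈ F, Y (p e) (q e) = y e := by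
    intro e he
    have : F.filter (fun f => p f = p e ∧ q f = q e) = {e} := by
      ext f
      simp only [Finset.mem_filter, Finset.mem_singleton]
      constructor
      · rintro ⟨h1, h2, h3⟩; exact hinj f h1 e he h2 h3
      · rintro rfl; exact ⟨he, rfl, rfl⟩
    simp only [Y, this, Finset.sum_singleton]
  let D : Matrix (A ⊕ B) (A ⊕ B) ℝ := fun i j => Sum.elim
    (fun a => Sum.elim (fun a' => if a = a' then 1 - ∑ b, Y a b else 0) (fun b => Y a b) j)
    (fun b => Sum.elim (fun a => Y a b) (fun b' => if b = b' then 1 - ∑ a, Y a b else 0) j) i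
  have D1 : ∀ a a', D (Sum.inl a) (Sum.inl a') = if a = a' then 1 - ∑ b, Y a b else 0 :=
    fun _ _ => rfl
  have D2 : ∀ a b, D (Sum.inl a) (Sum.inr b) = Y a b := fun _ _ => rfl
  have D3 : ∀ a b, D (Sum.inr b) (Sum.inl a) = Y a b := fun _ _ => rfl
  have D4 : ∀ b b', D (Sum.inr b) (Sum.inr b') = if b = b' then 1 - ∑ a, Y a b else 0 :=
    fun _ _ => rfl
  have hD : D ∈ doublyStochastic ℝ (A ⊕ B) := by
    rw [mem_doublyStochastic_iff_sum]
    refine ⟨?_, ?_, ?_⟩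
    · rintro (a | b) (a' | b')
      · rw [D1]
        split_ifs
        · rw [hrow]; linarith [hr a]
        · exact le_rfl
      · exact hY0 _ _
      · exact hY0 _ _
      · rw [D4]
        split_ifs
        · rw [hcol]; linarith [hc b]
        · exact le_rfl
    · rintro (a | b) <;> simp [D1, D2, D3, D4, Fintype.sum_sum_type]
    · rintro (a | b) <;> simp [D1, D2, D3, D4, Fintype.sum_sum_type]
  obtain ⟨c, hc0, hc1, hcD⟩ := exists_eq_sum_perm_of_mem_doublyStochastic hD
  let V : Equiv.Perm (A ⊕ B) → ℝ := fun σ =>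
    ∑ e ∈ F, w e * (if σ (Sum.inl (p e)) = Sum.inr (q e) then 1 else 0)
  have hV : ∑ e ∈ F, w e * y e = ∑ σ, c σ * V σ := by
    simp only [V, Finset.mul_sum]
    rw [Finset.sum_comm]
    refine Finset.sum_congr rfl fun e he => ?_
    have h1 : y e = D (Sum.inl (p e)) (Sum.inr (q e)) := (hYe e he).symm
    rw [h1, ← hcD, Matrix.sum_apply, Finset.mul_sum]
    refine Finset.sum_congr rfl fun σ _ => ?_
    simp only [Matrix.smul_apply, smul_eq_mul, Equiv.Perm.permMatrix, PEquiv.toMatrix_apply,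
      Equiv.toPEquiv_apply, Option.mem_def, Option.some.injEq]
    ring
  have hex : ∃ σ, ∑ e ∈ F, w e * y e ≤ V σ := by
    by_contra! hcon
    have hlt : ∑ σ, c σ * V σ < ∑ σ, c σ * ∑ e ∈ F, w e * y e := by
      have : ∃ σ, 0 < c σ := by
        by_contra! h
        have := Finset.sum_nonpos (s := Finset.univ) fun σ _ => h σ
        linarith
      obtain ⟨σ, hσ⟩ := this
      exact Finset.sum_lt_sum
        (fun τ _ => mul_le_mul_of_nonneg_left (hcon τ).le (hc0 τ))
        ⟨σ, Finset.mem_univ _, mul_lt_mul_of_pos_left (hcon σ) hσ⟩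
    rw [← Finset.sum_mul, hc1, one_mul, ← hV] at hlt
    exact lt_irrefl _ hlt
  obtain ⟨σ, hσ⟩ := hex
  refine ⟨F.filter (fun e => σ (Sum.inl (p e)) = Sum.inr (q e)), Finset.filter_subset _ _,
    ?_, ?_, ?_⟩
  · intro e he f hf h
    rw [Finset.mem_filter] at he hf
    refine hinj e he.1 f hf.1 h ?_
    have := he.2.symm.trans ((congrArg (fun a => σ (Sum.inl a)) h).trans hf.2)
    exact Sum.inr_injective this
  · intro e he f hf h
    rw [Finset.mem_filter] at he hf
    refine hinj e he.1 f hf.1 ?_ h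
    have := he.2.trans ((congrArg Sum.inr h).trans hf.2.symm)
    exact Sum.inl_injective (σ.injective this)
  · refine hσ.trans (le_of_eq ?_)
    simp only [V, mul_ite, mul_one, mul_zero, Finset.sum_filter]

lemma core_gen {ι A B : Type*} [Fintype A] [DecidableEq A] [DecidableEq B]
    (F : Finset ι) (p : ι → A) (q : ι → B)
    (hinj : ∀ e ∈ F, ∀ f ∈ F, p e = p f → q e = q f → e = f)
    (y w : ι → ℝ) (hy : ∀ e ∈ F, 0 ≤ y e)
    (hr : ∀ a, ∑ e ∈ F.filter (fun e => p e = a), y e ≤ 1)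
    (hc : ∀ b, ∑ e ∈ F.filter (fun e => q e = b), y e ≤ 1) :
    ∃ M ⊆ F, (∀ e ∈ M, ∀ f ∈ M, p e = p f → e = f) ∧
      (∀ e ∈ M, ∀ f ∈ M, q e = q f → e = f) ∧
      ∑ e ∈ F, w e * y e ≤ ∑ e ∈ M, w e := by
  classical
  let q' : ι → Option {b // b ∈ F.image q} := fun e =>
    if h : q e ∈ F.image q then some ⟨q e, h⟩ else none
  have hq' : ∀ e (he : e ∈ F), q' e = some ⟨q e, Finset.mem_image_of_mem q he⟩ := by
    intro e he
    simp only [q', dif_pos (Finset.mem_image_of_mem q he)]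
  have hqq : ∀ e ∈ F, ∀ f ∈ F, (q' e = q' f ↔ q e = q f) := by
    intro e he f hf
    rw [hq' e he, hq' f hf]
    simp
  obtain ⟨M, hM, h1, h2, h3⟩ := core_aux F p q'
    (fun e he f hf h h' => hinj e he f hf h ((hqq e he f hf).1 h')) y w hy hr (by
      rintro (_ | ⟨b, hb⟩)
      · rw [Finset.filter_false_of_mem]
        · simp
        · intro e he; rw [hq' e he]; simp
      · refine le_trans (le_of_eq ?_) (hc b)
        refine Finset.sum_congr (Finset.filter_congr fun e he => ?_) fun _ _ => rfl
        rw [hq' e he]; simp)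
  exact ⟨M, hM, h1, fun e he f hf h => h2 e he f hf ((hqq e (hM he) f (hM hf)).2 h), h3⟩

lemma count_shift (d : ℕ) (hd : 1 ≤ d) (a : ℕ) :
    ((Finset.range (2 * d - 1)).filter (fun k => (a + k) % (2 * d - 1) < d)).card = d := by
  obtain ⟨m, hm⟩ : ∃ m, m = 2 * d - 1 := ⟨_, rfl⟩
  rw [← hm]
  have : ((Finset.range m).filter (fun k => (a + k) % m < d)).card
      = ((Finset.range m).filter (fun k => k < d)).card := by
    have hm0 : 0 < m := by omega
    refine Finset.card_bij (fun k _ => (a + k) % m) ?_ ?_ ?_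
    · intro k hk
      simp only [Finset.mem_filter, Finset.mem_range] at hk ⊢
      exact ⟨Nat.mod_lt _ hm0, hk.2⟩
    · intro k hk l hl h
      simp only [Finset.mem_filter, Finset.mem_range] at hk hl
      have h' : a + k ≡ a + l [MOD m] := h
      have := Nat.ModEq.add_left_cancel' a h'
      exact Nat.ModEq.eq_of_lt_of_lt this hk.1 hl.1
    · intro b hb
      simp only [Finset.mem_filter, Finset.mem_range] at hb
      have key : (a + (b + (m - a % m)) % m) % m = b := by
        have ha : a % m < m := Nat.mod_lt _ hm0
        have e1 : a + (b + (m - a % m)) = b + m * (a / m + 1) := by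
          have := Nat.div_add_mod a m
          rw [Nat.mul_add]
          omega
        rw [Nat.add_mod_mod, e1, Nat.add_mul_mod_self_left, Nat.mod_eq_of_lt hb.1]
      refine ⟨(b + (m - a % m)) % m, ?_, key⟩
      simp only [Finset.mem_filter, Finset.mem_range]
      exact ⟨Nat.mod_lt _ hm0, by rw [key]; exact hb.2⟩
  rw [this]
  have : (Finset.range m).filter (fun k => k < d) = Finset.range d := by
    ext k; simp only [Finset.mem_filter, Finset.mem_range]; omega
  rw [this, Finset.card_range]

lemma block_near {m d u v : ℕ} (hu : u % m < d) (hv : v % m < d) (h : u / m = v / m)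
    (huv : u ≤ v) : v < u + d := by
  have h1 := Nat.div_add_mod u m
  have h2 := Nat.div_add_mod v m
  rw [h] at h1
  omega

lemma block_far {d u v : ℕ} (hd : 1 ≤ d) (hu : u % (2 * d - 1) < d)
    (h : u / (2 * d - 1) < v / (2 * d - 1)) : u + d ≤ v := by
  have h1 := Nat.div_add_mod u (2 * d - 1)
  have h2 := Nat.div_add_mod v (2 * d - 1)
  have h3 := Nat.mul_le_mul_left (2 * d - 1) (Nat.succ_le_of_lt h)
  rw [Nat.succ_eq_add_one, Nat.mul_add, Nat.mul_one] at h3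
  omega

lemma shift_match {n : ℕ} {T : Type*} [DecidableEq T]
    (d : ℕ) (hd : 1 ≤ d) (E : Finset (Fin n × T)) (w : Fin n × T → ℝ)
    (x : Fin n × T → ℝ) (hx : FeasLP1 d E x) (k : ℕ) :
    ∃ M, DDM d E M ∧
      ∑ e ∈ E.filter (fun e => (e.1.val + k) % (2 * d - 1) < d), w e * x e ≤ ∑ e ∈ M, w e := by
  obtain ⟨hx0, _, hxr, hxc⟩ := hx
  set F := E.filter (fun e => (e.1.val + k) % (2 * d - 1) < d) with hF
  have hFE : F ⊆ E := Finset.filter_subset _ _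
  have hFm : ∀ e ∈ F, (e.1.val + k) % (2 * d - 1) < d := fun e he => (Finset.mem_filter.1 he).2
  obtain ⟨M, hM, h1, h2, h3⟩ := core_gen F (fun e => e.1)
    (fun e => ((e.1.val + k) / (2 * d - 1), e.2))
    (fun e _ f _ h h' => Prod.ext h (Prod.ext_iff.1 h').2) x w (fun e _ => hx0 e)
    (fun a => le_trans (Finset.sum_le_sum_of_subset_of_nonneg
      (Finset.filter_subset_filter _ hFE) fun e _ _ => hx0 e) (hxr a))
    (by
      rintro ⟨j, t⟩
      rcases (F.filter (fun e => ((e.1.val + k) / (2 * d - 1), e.2) = (j, t))).eq_empty_or_nonempty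
        with h0 | h0
      · rw [h0]; simp
      · obtain ⟨e, he, hmin⟩ := Finset.exists_min_image _ (fun e : Fin n × T => e.1.val) h0
        refine le_trans (Finset.sum_le_sum_of_subset_of_nonneg ?_ fun e _ _ => hx0 e) (hxc e.1 t)
        intro f hf
        have hle := hmin f hf
        simp only [Finset.mem_filter, Prod.mk.injEq] at he hf ⊢
        have := block_near (hFm e he.1) (hFm f hf.1) (he.2.1.trans hf.2.1.symm) (by omega)
        exact ⟨hFE hf.1, hf.2.2, hle, by omega⟩)
  refine ⟨M, ⟨hM.trans hFE, h1, ?_⟩, h3⟩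
  intro e he f hf ht hne
  have hb : (e.1.val + k) / (2 * d - 1) ≠ (f.1.val + k) / (2 * d - 1) := fun hb =>
    hne (h2 e he f hf (Prod.ext hb ht))
  rw [Nat.dist]
  rcases lt_or_gt_of_ne hb with hlt | hlt
  · have := block_far hd (hFm e (hM he)) hlt
    omega
  · have := block_far hd (hFm f (hM hf)) hlt
    omega

/-- The integrality gap of LP1 is at most `2 − 1/(2d−1)`: every feasible solution of LP1
has objective value at most `(2 − 1/(2d−1))` times the weight of some `d`-distance
matching. -/
theorem stmt6 {n : ℕ} {T : Type*} [DecidableEq T]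
    (d : ℕ) (hd : 1 ≤ d) (E : Finset (Fin n × T))
    (w : Fin n × T → ℝ) (hw : ∀ e ∈ E, 0 ≤ w e)
    (x : Fin n × T → ℝ) (hx : FeasLP1 d E x) :
    ∃ M, DDM d E M ∧
      ∑ e ∈ E, w e * x e ≤ (2 - 1 / (2 * (d : ℝ) - 1)) * ∑ e ∈ M, w e := by
  choose M hM hMw using shift_match d hd E w x hx
  have hne : (Finset.range (2 * d - 1)).Nonempty := by
    rw [Finset.nonempty_range_iff]; omega
  obtain ⟨k, _, hk⟩ := Finset.exists_max_image (Finset.range (2 * d - 1))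
    (fun k => ∑ e ∈ M k, w e) hne
  refine ⟨M k, hM k, ?_⟩
  have hsum : ∑ j ∈ Finset.range (2 * d - 1),
      ∑ e ∈ E.filter (fun e => (e.1.val + j) % (2 * d - 1) < d), w e * x e
      = d * ∑ e ∈ E, w e * x e := by
    simp only [Finset.sum_filter]
    rw [Finset.sum_comm, Finset.mul_sum]
    refine Finset.sum_congr rfl fun e _ => ?_
    rw [← Finset.sum_filter, Finset.sum_const, count_shift d hd, nsmul_eq_mul]
  have hle : (d : ℝ) * ∑ e ∈ E, w e * x e ≤ (2 * (d : ℝ) - 1) * ∑ e ∈ M k, w e := by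
    rw [← hsum]
    refine (Finset.sum_le_card_nsmul _ _ _ fun j hj => (hMw j).trans (hk j hj)).trans ?_
    rw [Finset.card_range, nsmul_eq_mul, Nat.cast_sub (by omega)]
    push_cast
    exact le_rfl
  have hW : 0 ≤ ∑ e ∈ M k, w e := Finset.sum_nonneg fun e he => hw e ((hM k).1 he)
  have hd' : (1 : ℝ) ≤ d := by exact_mod_cast hd
  have h1 : ∑ e ∈ E, w e * x e ≤ (2 - 1 / (d : ℝ)) * ∑ e ∈ M k, w e := by
    have : (2 - 1 / (d : ℝ)) * ∑ e ∈ M k, w e = ((2 * (d : ℝ) - 1) * ∑ e ∈ M k, w e) / d := by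
      field_simp
    rw [this, le_div_iff₀ (by linarith)]
    linarith
  refine h1.trans (mul_le_mul_of_nonneg_right ?_ hW)
  have := one_div_le_one_div_of_le (by linarith : (0 : ℝ) < d) (by linarith : (d : ℝ) ≤ 2 * d - 1)
  linarith
end

section
/- If d = 1 or d = 2, then LP1 and LP2 are integral: for every weight function w : E → ℝ, LP1 attains its optimum at an integral vector, so its optimum equals the maximum weight of a d-distance matching; and, whenever LP2 is feasible, LP2 attains its optimum at an integral vector, so its optimum equals the maximum weight of a perfect d-distance matching. -/
open Finset

/-- `x` is a feasible solution of LP2 (LP1 with the degree constraints on `S` tightened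
to equalities). -/
def FeasLP2 {n : ℕ} {T : Type*} [DecidableEq T]
    (d : ℕ) (E : Finset (Fin n × T)) (x : Fin n × T → ℝ) : Prop :=
  (∀ e, 0 ≤ x e) ∧ (∀ e ∉ E, x e = 0) ∧
  (∀ s : Fin n, ∑ e ∈ E.filter (fun e => e.1 = s), x e = 1) ∧
  (∀ s : Fin n, ∀ t : T,
    ∑ e ∈ E.filter (fun e => e.2 = t ∧ s.val ≤ e.1.val ∧ e.1.val < s.val + d), x e ≤ 1)

theorem avg_exists {A : Type*} [Fintype A] (p g : A → ℝ) (hp : ∀ a, 0 ≤ p a)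
    (hP : 0 < ∑ a, p a) : ∃ a, 0 < p a ∧ ∑ b, p b * g b ≤ g a * ∑ b, p b := by
  by_contra! hcon
  set P := ∑ a, p a with hPdef
  set G := ∑ b, p b * g b with hG
  have h1 : ∀ a, p a * (g a * P) ≤ p a * G := by
    intro a
    rcases (hp a).eq_or_lt with h | h
    · rw [← h]; simp
    · exact mul_le_mul_of_nonneg_left (hcon a h).le (hp a)
  obtain ⟨a0, -, ha0⟩ : ∃ a ∈ (univ : Finset A), 0 < p a := by
    by_contra! h
    exact absurd (Finset.sum_nonpos h) (not_le.mpr hP)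
  have h2 : ∑ a, p a * (g a * P) < ∑ a, p a * G := by
    apply Finset.sum_lt_sum (fun a _ => h1 a)
    exact ⟨a0, mem_univ _, mul_lt_mul_of_pos_left (hcon a0 ha0) ha0⟩
  rw [← Finset.sum_mul, ← hPdef] at h2
  have h3 : ∑ a, p a * (g a * P) = G * P := by
    rw [hG, Finset.sum_mul]
    exact Finset.sum_congr rfl (fun a _ => by ring)
  rw [h3] at h2
  linarith [mul_comm G P]

theorem chain_exists {A : Type*} [Fintype A] (p : ℕ → A → ℝ) (q : ℕ → A → A → ℝ)
    (h : ℕ → A → ℝ) (hp : ∀ k a, 0 ≤ p k a) (hp1 : ∀ k, ∑ a, p k a = 1)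
    (hq : ∀ k a b, 0 ≤ q k a b) (hq1 : ∀ k a, ∑ b, q k a b = p k a)
    (hq2 : ∀ k b, ∑ a, q k a b = p (k+1) b) (N : ℕ) :
    ∀ g : A → ℝ, ∃ s : ℕ → A, (∀ k ≤ N, 0 < p k (s k)) ∧
      (∀ k < N, 0 < q k (s k) (s (k+1))) ∧
      ∑ k ∈ range N, ∑ a, p k a * h k a + ∑ a, p N a * g a
        ≤ ∑ k ∈ range N, h k (s k) + g (s N) := by
  induction N with
  | zero =>
    intro g
    obtain ⟨a, ha, hle⟩ := avg_exists (p 0) g (hp 0) (by rw [hp1]; norm_num)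
    refine ⟨fun _ => a, ?_, ?_, ?_⟩
    · intro k hk
      obtain rfl : k = 0 := by omega
      exact ha
    · intro k hk; omega
    · rw [hp1] at hle; simpa using hle
  | succ N ih =>
    intro g
    obtain ⟨s, h1, h2, h3⟩ := ih (fun a => h N a + (∑ b, q N a b * g b) / p N a)
    have hpos := h1 N le_rfl
    obtain ⟨b, hb, hle⟩ := avg_exists (q N (s N)) g (hq N _) (by rw [hq1]; exact hpos)
    rw [hq1] at hle
    refine ⟨fun k => if k ≤ N then s k else b, ?_, ?_, ?_⟩
    · intro k hk
      by_cases hkN : k ≤ N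
      · simpa [hkN] using h1 k hkN
      · obtain rfl : k = N + 1 := by omega
        simp only [hkN, if_false]
        rw [← hq2]
        exact lt_of_lt_of_le hb
          (Finset.single_le_sum (f := fun a => q N a b) (fun a _ => hq N a b) (mem_univ (s N)))
    · intro k hk
      by_cases hkN : k < N
      · have e1 : k ≤ N := hkN.le
        have e2 : k + 1 ≤ N := hkN
        simpa [e1, e2] using h2 k hkN
      · obtain rfl : k = N := by omega
        simpa using hb
    · have e1 : ∑ k ∈ range N, h k (if k ≤ N then s k else b) = ∑ k ∈ range N, h k (s k) := by
        apply Finset.sum_congr rfl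
        intro k hk
        rw [if_pos (Finset.mem_range.mp hk).le]
      have e2 : ∑ a, p N a * (h N a + (∑ b, q N a b * g b) / p N a)
          = ∑ a, p N a * h N a + ∑ b, p (N+1) b * g b := by
        have : ∀ a, p N a * (h N a + (∑ b, q N a b * g b) / p N a)
            = p N a * h N a + ∑ b, q N a b * g b := by
          intro a
          rcases (hp N a).eq_or_lt with h0 | h0
          · have hz : ∀ b, q N a b = 0 := by
              intro b
              have := (Finset.sum_eq_zero_iff_of_nonneg (fun b _ => hq N a b)).mp
                ((hq1 N a).trans h0.symm)
              exact this b (mem_univ b)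
            simp [← h0, hz]
          · field_simp
        rw [Finset.sum_congr rfl (fun a _ => this a), Finset.sum_add_distrib,
          Finset.sum_comm (f := fun a b => q N a b * g b)]
        congr 1
        apply Finset.sum_congr rfl
        intro b _
        rw [← hq2, Finset.sum_mul]
      rw [e2] at h3
      have e3 : (∑ b, q N (s N) b * g b) / p N (s N) ≤ g b := by
        rw [div_le_iff₀ hpos]; exact hle
      rw [Finset.sum_range_succ, Finset.sum_range_succ, e1]
      simp
      linarith

theorem coupling_exists {A : Type*} [Fintype A] [DecidableEq A] (D : Finset A) (p r : A → ℝ)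
    (hp : ∀ a, 0 ≤ p a) (hr : ∀ a, 0 ≤ r a) (hp1 : ∑ a, p a = 1) (hr1 : ∑ a, r a = 1)
    (hD : ∀ a ∈ D, p a + r a ≤ 1) :
    ∃ q : A → A → ℝ, (∀ a b, 0 ≤ q a b) ∧ (∀ a, ∑ b, q a b = p a) ∧
      (∀ b, ∑ a, q a b = r b) ∧ ∀ a ∈ D, q a a = 0 := by
  let K : Set (A → A → ℝ) := {q | (∀ a b, 0 ≤ q a b) ∧ (∀ a, ∑ b, q a b = p a) ∧
      (∀ b, ∑ a, q a b = r b)}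
  have hKcl : IsClosed K := by
    have e : K = (⋂ a, ⋂ b, {q : A → A → ℝ | 0 ≤ q a b}) ∩
      ((⋂ a, {q : A → A → ℝ | ∑ b, q a b = p a}) ∩ (⋂ b, {q : A → A → ℝ | ∑ a, q a b = r b})) := by
      ext q; simp [K]
    rw [e]
    refine IsClosed.inter ?_ (IsClosed.inter ?_ ?_)
    · exact isClosed_iInter fun a => isClosed_iInter fun b =>
        isClosed_le continuous_const (by fun_prop)
    · exact isClosed_iInter fun a => isClosed_eq (by fun_prop) continuous_const
    · exact isClosed_iInter fun a => isClosed_eq (by fun_prop) continuous_const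
  have hKc : IsCompact K := by
    have hc : IsCompact (Set.pi Set.univ fun _ : A => Set.pi Set.univ fun _ : A =>
        Set.Icc (0:ℝ) 1) :=
      isCompact_univ_pi fun _ => isCompact_univ_pi fun _ => isCompact_Icc
    refine hc.of_isClosed_subset hKcl ?_
    rintro q ⟨h0, h1, -⟩ a - b -
    refine ⟨h0 a b, ?_⟩
    calc q a b ≤ ∑ b, q a b := Finset.single_le_sum (fun b _ => h0 a b) (mem_univ b)
      _ = p a := h1 a
      _ ≤ ∑ a, p a := Finset.single_le_sum (fun b _ => hp b) (mem_univ a)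
      _ = 1 := hp1
  have hKne : K.Nonempty := by
    refine ⟨fun a b => p a * r b, fun a b => mul_nonneg (hp a) (hr b), fun a => ?_, fun b => ?_⟩
    · rw [← Finset.mul_sum, hr1, mul_one]
    · rw [← Finset.sum_mul, hp1, one_mul]
  obtain ⟨q, hqK, hmin⟩ := hKc.exists_isMinOn hKne
    (f := fun q : A → A → ℝ => ∑ a ∈ D, q a a) (by fun_prop)
  obtain ⟨h0, h1, h2⟩ := hqK
  refine ⟨q, h0, h1, h2, ?_⟩
  intro a ha
  by_contra hne
  have hpos : 0 < q a a := lt_of_le_of_ne (h0 a a) (Ne.symm hne)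
  -- an entry off the row and the column
  obtain ⟨b, hb, c, hc, hbc⟩ : ∃ b, b ≠ a ∧ ∃ c, c ≠ a ∧ 0 < q b c := by
    by_contra! hcon
    have hz : ∀ b, b ≠ a → r a + 0 = r a → p b = q b a := by
      intro b hb _
      rw [← h1 b]
      apply Finset.sum_eq_single a
      · intro c _ hc
        exact le_antisymm (hcon b hb c hc) (h0 b c)
      · simp
    have s1 : ∑ b, p b = p a + ∑ b ∈ univ.erase a, p b :=
      (Finset.add_sum_erase _ _ (mem_univ a)).symm
    have s2 : ∑ b, q b a = q a a + ∑ b ∈ univ.erase a, q b a :=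
      (Finset.add_sum_erase _ (fun b => q b a) (mem_univ a)).symm
    have s3 : ∑ b ∈ univ.erase a, p b = ∑ b ∈ univ.erase a, q b a :=
      Finset.sum_congr rfl fun b hb => hz b (Finset.ne_of_mem_erase hb) (by simp)
    have := hD a ha
    rw [h2] at s2
    linarith
  set ε := min (q a a) (q b c) with hε
  have hεpos : 0 < ε := lt_min hpos hbc
  have hε1 : ε ≤ q a a := min_le_left _ _
  have hε2 : ε ≤ q b c := min_le_right _ _
  -- u = indicator of a minus indicator of b, v = indicator of a minus indicator of c
  let u : A → ℝ := fun i => (if i = a then 1 else 0) - (if i = b then 1 else 0)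
  let v : A → ℝ := fun i => (if i = a then 1 else 0) - (if i = c then 1 else 0)
  have hu : ∑ i, u i = 0 := by simp [u]
  have hv : ∑ i, v i = 0 := by simp [v]
  have hq'K : (fun i j => q i j - ε * (u i * v j)) ∈ K := by
    refine ⟨?_, ?_, ?_⟩
    · intro i j
      have := h0 i j
      simp only [u, v]
      by_cases i1 : i = a
      · subst i1
        by_cases j1 : j = i
        · subst j1; simp [hb.symm, hc.symm]; linarith
        · by_cases j2 : j = c
          · subst j2; simp [hb.symm, hc]; linarith
          · simp [j1, j2]; linarith
      · by_cases i2 : i = b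
        · subst i2
          by_cases j1 : j = a
          · subst j1; simp [hb, hc.symm]; linarith
          · by_cases j2 : j = c
            · subst j2; simp [hb, hc]; linarith
            · simp [j1, j2]; linarith
        · simp [i1, i2]; linarith
    · intro i
      rw [Finset.sum_sub_distrib, h1, ← Finset.mul_sum, ← Finset.mul_sum, hv]; simp
    · intro j
      rw [Finset.sum_sub_distrib, h2, ← Finset.mul_sum, ← Finset.sum_mul, hu]; simp
  have hm := isMinOn_iff.mp hmin _ hq'K
  have hlt : ∑ i ∈ D, (q i i - ε * (u i * v i)) < ∑ i ∈ D, q i i := by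
    apply Finset.sum_lt_sum
    · intro i _
      have : 0 ≤ u i * v i := by
        simp only [u, v]
        by_cases i1 : i = a
        · subst i1; simp [hb.symm, hc.symm]
        · simp [i1]; split_ifs <;> simp
      nlinarith
    · refine ⟨a, ha, ?_⟩
      simp [u, v, hb.symm, hc.symm, hεpos]
  linarith

theorem sum_edges {n : ℕ} {T : Type*} [DecidableEq T] (E : Finset (Fin n × T))
    (f : Fin n × T → ℝ) (hf : ∀ e ∉ E, f e = 0) :
    ∑ e ∈ E, f e = ∑ i : Fin n, ∑ t : {t // t ∈ E.image Prod.snd}, f (i, t.1) := by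
  have : ∀ i : Fin n, ∑ t : {t // t ∈ E.image Prod.snd}, f (i, t.1)
      = ∑ t ∈ E.image Prod.snd, f (i, t) := fun i =>
    Finset.sum_coe_sort (E.image Prod.snd) (fun t => f (i, t))
  simp only [this]
  rw [← Finset.sum_product]
  apply Finset.sum_subset
  · intro e he
    simp only [mem_product, mem_univ, true_and]
    exact Finset.mem_image_of_mem _ he
  · intro e _ he; exact hf e he

theorem round_exists {n : ℕ} {T : Type*} [DecidableEq T]
    (d : ℕ) (hd : d = 1 ∨ d = 2) (E : Finset (Fin n × T)) (w x : Fin n × T → ℝ)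
    (hx : FeasLP1 d E x) :
    ∃ M, DDM d E M ∧ (∀ i : Fin n, ∑ e ∈ E.filter (fun e => e.1 = i), x e = 1 →
      ∃ t, (i, t) ∈ M) ∧ ∑ e ∈ E, w e * x e ≤ ∑ e ∈ M, w e := by
  classical
  obtain ⟨x0, xE, xS, xW⟩ := hx
  let T' := {t // t ∈ E.image Prod.snd}
  let y : ℕ → T' → ℝ := fun k t => if h : k < n then x (⟨k, h⟩, t.1) else 0
  let p : ℕ → Option T' → ℝ := fun k a => a.elim (1 - ∑ t, y k t) (y k)
  have hrow : ∀ i : Fin n, ∑ t, y i t = ∑ e ∈ E.filter (fun e => e.1 = i), x e := by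
    intro i
    rw [Finset.sum_filter, sum_edges E _ (by intro e he; simp [xE e he])]
    rw [Finset.sum_eq_single i]
    · simp [y, T']
    · intro j _ hj; simp [hj]
    · simp
  have hy0 : ∀ k t, 0 ≤ y k t := by
    intro k t; simp only [y]; split_ifs
    · exact x0 _
    · exact le_rfl
  have hy1 : ∀ k, ∑ t, y k t ≤ 1 := by
    intro k
    by_cases hk : k < n
    · exact (hrow ⟨k, hk⟩).trans_le (xS ⟨k, hk⟩)
    · simp [y, hk]
  have hp : ∀ k a, 0 ≤ p k a := by
    intro k a
    cases a with
    | none => simp only [p, Option.elim]; linarith [hy1 k]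
    | some t => exact hy0 k t
  have hp1 : ∀ k, ∑ a, p k a = 1 := by
    intro k; rw [Fintype.sum_option]; simp [p]
  let D : Finset (Option T') := if d = 2 then univ.erase none else ∅
  have hD : ∀ k, ∀ a ∈ D, p k a + p (k+1) a ≤ 1 := by
    intro k a ha
    rcases hd with rfl | rfl
    · simp [D] at ha
    · cases a with
      | none => simp [D] at ha
      | some t =>
        simp only [p, Option.elim]
        by_cases hk : k + 1 < n
        · have hk' : k < n := by omega
          have := xW ⟨k, hk'⟩ t.1
          have hs : ∑ e ∈ ({(⟨k, hk'⟩, t.1), (⟨k+1, hk⟩, t.1)} : Finset (Fin n × T)), x e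
              ≤ 1 := by
            refine le_trans (le_of_eq ?_) this
            symm
            apply Finset.sum_subset_zero_on_sdiff
            · rintro ⟨⟨j, hj⟩, t'⟩ he
              simp only [mem_filter] at he
              obtain ⟨-, h1, h2, h3⟩ := he
              simp only [mem_insert, mem_singleton, Prod.mk.injEq, Fin.mk.injEq]
              have : j = k ∨ j = k + 1 := by
                omega
              tauto
            · intro e he
              apply xE
              intro heE
              simp only [mem_sdiff, mem_insert, mem_singleton, mem_filter] at he
              obtain ⟨h1, h2⟩ := he
              rcases h1 with rfl | rfl <;> simp [heE] at h2
            · intro _ _; rfl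
          rw [Finset.sum_pair (by simp)] at hs
          simpa [y, hk, hk'] using hs
        · have e1 : y (k+1) t = 0 := by simp [y, hk]
          rw [e1, add_zero]
          exact (Finset.single_le_sum (fun t _ => hy0 k t) (mem_univ t)).trans (hy1 k)
  choose q hq hq1 hq2 hqD using fun k =>
    coupling_exists D (p k) (p (k+1)) (hp k) (hp (k+1)) (hp1 k) (hp1 (k+1)) (hD k)
  let h : ℕ → Option T' → ℝ := fun k a =>
    a.elim 0 (fun t => if hk : k < n then w (⟨k, hk⟩, t.1) else 0)
  obtain ⟨s, s1, s2, s3⟩ := chain_exists p q h hp hp1 hq hq1 hq2 n (fun _ => 0)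
  have hsE : ∀ (i : Fin n) (t : T'), s i = some t → (i, t.1) ∈ E := by
    intro i t hst
    by_contra hne
    have := s1 i i.2.le
    rw [hst] at this
    simp [p, y, xE _ hne] at this
  let M := E.filter (fun e => ∃ t : T', s e.1 = some t ∧ t.1 = e.2)
  have hM : ∀ e, e ∈ M ↔ e ∈ E ∧ ∃ t : T', s e.1 = some t ∧ t.1 = e.2 := by
    intro e; exact mem_filter
  refine ⟨M, ⟨filter_subset _ _, ?_, ?_⟩, ?_, ?_⟩
  · intro e he f hf hef
    obtain ⟨-, t, ht, hte⟩ := (hM e).mp he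
    obtain ⟨-, t', ht', hte'⟩ := (hM f).mp hf
    rw [hef, ht'] at ht
    obtain rfl := Option.some.inj ht
    exact Prod.ext hef (hte.symm.trans hte')
  · intro e he f hf hef hne
    obtain ⟨-, t, ht, hte⟩ := (hM e).mp he
    obtain ⟨-, t', ht', hte'⟩ := (hM f).mp hf
    obtain rfl : t = t' := Subtype.ext (by rw [hte, hte', hef])
    have h12 : e.1.val ≠ f.1.val := fun h => hne (Prod.ext (Fin.ext h) hef)
    rcases hd with rfl | rfl
    · simp only [Nat.dist]; omega
    · have key : ∀ k < n, s k = some t → s (k+1) = some t → False := by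
        intro k hk a1 a2
        have b1 := s2 k hk
        rw [a1, a2, hqD k (some t) (by simp [D])] at b1
        exact lt_irrefl _ b1
      by_contra hlt
      have : f.1.val = e.1.val + 1 ∨ e.1.val = f.1.val + 1 := by
        simp only [Nat.dist] at hlt; omega
      rcases this with hh | hh
      · exact key e.1 e.1.2 ht (hh ▸ ht')
      · exact key f.1 f.1.2 ht' (hh ▸ ht)
  · intro i hi
    cases hsi : s i with
    | none =>
      have := s1 i i.2.le
      rw [hsi] at this
      simp only [p, Option.elim] at this
      rw [hrow, hi] at this
      simp at this
    | some t => exact ⟨t.1, (hM _).mpr ⟨hsE i t hsi, t, hsi, rfl⟩⟩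
  · have l1 : ∑ e ∈ E, w e * x e = ∑ k ∈ range n, ∑ a, p k a * h k a := by
      rw [sum_edges E _ (by intro e he; simp [xE e he]), Finset.sum_range]
      apply Finset.sum_congr rfl
      intro i _
      rw [Fintype.sum_option]
      simp [p, h, y, T', mul_comm]
    have l2 : ∑ e ∈ M, w e = ∑ k ∈ range n, h k (s k) := by
      have e0 : ∑ e ∈ M, w e
          = ∑ e ∈ E, if ∃ t : T', s e.1 = some t ∧ t.1 = e.2 then w e else 0 :=
        Finset.sum_filter _ _
      rw [e0, sum_edges E, Finset.sum_range]
      · apply Finset.sum_congr rfl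
        intro i _
        cases hsi : s i with
        | none =>
          apply Finset.sum_eq_zero
          intro t _
          rw [if_neg]
          rintro ⟨t', h1, -⟩
          dsimp only at h1
          rw [hsi] at h1
          cases h1
        | some t =>
          rw [Finset.sum_eq_single t]
          · rw [if_pos ⟨t, hsi, rfl⟩]
            simp [h]
          · intro t' _ hne
            rw [if_neg]
            rintro ⟨t2, h1, h2⟩
            dsimp only at h1
            rw [hsi] at h1
            obtain rfl := Option.some.inj h1
            exact hne (Subtype.ext h2.symm)
          · intro hh
            exact absurd (mem_univ t) hh
      · intro e he
        rw [if_neg]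
        rintro ⟨t, ht, hte⟩
        have := hsE e.1 t ht
        rw [hte] at this
        exact he this
    rw [l1, l2]
    simpa using s3

theorem stmt8 {n : ℕ} {T : Type*} [DecidableEq T]
    (d : ℕ) (hd : d = 1 ∨ d = 2) (E : Finset (Fin n × T)) :
    ∀ w : Fin n × T → ℝ,
      (∃ M, DDM d E M ∧ ∀ x, FeasLP1 d E x → ∑ e ∈ E, w e * x e ≤ ∑ e ∈ M, w e) ∧
      ((∃ x, FeasLP2 d E x) → ∃ M, PerfectDDM d E M ∧
        ∀ x, FeasLP2 d E x → ∑ e ∈ E, w e * x e ≤ ∑ e ∈ M, w e) := by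
  classical
  intro w
  have h21 : ∀ x, FeasLP2 d E x → FeasLP1 d E x := fun x hx =>
    ⟨hx.1, hx.2.1, fun s => (hx.2.2.1 s).le, hx.2.2.2⟩
  constructor
  · obtain ⟨M, hM, hmax⟩ := Finset.exists_max_image (E.powerset.filter (DDM d E))
      (fun M => ∑ e ∈ M, w e)
      ⟨∅, by simp [DDM]⟩
    refine ⟨M, (mem_filter.mp hM).2, fun x hx => ?_⟩
    obtain ⟨M', hM', -, hle⟩ := round_exists d hd E w x hx
    exact hle.trans (hmax M' (mem_filter.mpr ⟨mem_powerset.mpr hM'.1, hM'⟩))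
  · rintro ⟨x₀, hx₀⟩
    have hr : ∀ x, FeasLP2 d E x → ∃ M, PerfectDDM d E M ∧
        ∑ e ∈ E, w e * x e ≤ ∑ e ∈ M, w e := by
      intro x hx
      obtain ⟨M', hM', hp, hle⟩ := round_exists d hd E w x (h21 x hx)
      exact ⟨M', ⟨hM', fun i => hp i (hx.2.2.1 i)⟩, hle⟩
    obtain ⟨M₀, hM₀, -⟩ := hr x₀ hx₀
    obtain ⟨M, hM, hmax⟩ := Finset.exists_max_image (E.powerset.filter (PerfectDDM d E))
      (fun M => ∑ e ∈ M, w e)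
      ⟨M₀, mem_filter.mpr ⟨mem_powerset.mpr hM₀.1.1, hM₀⟩⟩
    refine ⟨M, (mem_filter.mp hM).2, fun x hx => ?_⟩
    obtain ⟨M', hM', hle⟩ := hr x hx
    exact hle.trans (hmax M' (mem_filter.mpr ⟨mem_powerset.mpr hM'.1.1, hM'⟩))
end

section
/- Let θ > 0, let x be a feasible solution of LP1, and suppose there exists an order of the edges of G that is θ-flat with respect to x. Then there exists a d-distance matching M of G with θ·w(M) ≥ Σ_{e∈E} w_e x_e. -/
open Finset

/-- The list `l` of edges is a `θ`-flat order with respect to `x`. -/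
def IsFlatOrder {n : ℕ} {T : Type*} [DecidableEq T]
    (d : ℕ) (θ : ℝ) (x : Fin n × T → ℝ) (l : List (Fin n × T)) : Prop :=
  ∀ i : Fin l.length,
    (∑ j ∈ Finset.univ.filter
        (fun j : Fin l.length => i < j ∧ (l.get j).1 = (l.get i).1), x (l.get j)) +
    (∑ j ∈ Finset.univ.filter
        (fun j : Fin l.length => i < j ∧ (l.get j).2 = (l.get i).2 ∧
          Nat.dist (l.get j).1.val (l.get i).1.val < d), x (l.get j))
    ≤ θ - x (l.get i)

theorem flat_cons {n : ℕ} {T : Type*} [DecidableEq T]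
    (d : ℕ) (θ : ℝ) (x : Fin n × T → ℝ) (e : Fin n × T) (l : List (Fin n × T))
    (h : IsFlatOrder d θ x (e :: l)) :
    IsFlatOrder d θ x l ∧
    (l.map (fun f => if f.1 = e.1 then x f else 0)).sum +
    (l.map (fun f => if f.2 = e.2 ∧ Nat.dist f.1.val e.1.val < d then x f else 0)).sum
      ≤ θ - x e := by
  constructor
  · intro i
    have := h i.succ
    simp only [Finset.sum_filter] at this ⊢
    erw [Fin.sum_univ_succ, Fin.sum_univ_succ] at this
    simpa using this
  · have := h (0 : Fin (l.length + 1))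
    simp only [Finset.sum_filter] at this
    erw [Fin.sum_univ_succ, Fin.sum_univ_succ] at this
    have key : ∀ g : Fin n × T → ℝ, (l.map g).sum = ∑ j : Fin l.length, g (l.get j) := by
      intro g
      rw [← List.sum_ofFn]
      congr 1
      exact (List.ofFn_getElem_eq_map l g).symm
    rw [key, key]
    simpa using this

theorem flat_main {n : ℕ} {T : Type*} [DecidableEq T]
    (d : ℕ) (θ : ℝ) (hθ : 0 < θ) (x : Fin n × T → ℝ) (hx : ∀ e, 0 ≤ x e)
    (l : List (Fin n × T)) : ∀ (w : Fin n × T → ℝ), l.Nodup → IsFlatOrder d θ x l →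
    ∃ M, DDM d l.toFinset M ∧ (l.map (fun e => w e * x e)).sum ≤ θ * ∑ e ∈ M, w e := by
  induction l with
  | nil => intro w _ _; exact ⟨∅, by simp [DDM], by simp⟩
  | cons e l ih =>
    intro w hnd hf
    obtain ⟨hfl, hfe⟩ := flat_cons d θ x e l hf
    obtain ⟨hel, hnd⟩ := List.nodup_cons.1 hnd
    by_cases hwe : w e ≤ 0
    · obtain ⟨M, ⟨h1, h2, h3⟩, h⟩ := ih w hnd hfl
      refine ⟨M, ⟨fun a ha => ?_, h2, h3⟩, ?_⟩
      · have := h1 ha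
        simp at this ⊢; tauto
      · have := mul_nonpos_of_nonpos_of_nonneg hwe (hx e)
        simp only [List.map_cons, List.sum_cons]; linarith
    push Not at hwe
    let c : Fin n × T → ℝ := fun f =>
      if f.1 = e.1 ∨ (f.2 = e.2 ∧ Nat.dist f.1.val e.1.val < d) then 1 else 0
    have hc0 : ∀ f, 0 ≤ c f := by intro f; simp only [c]; split_ifs <;> norm_num
    have hce : c e = 1 := by simp [c]
    obtain ⟨M, ⟨h1, h2, h3⟩, h⟩ := ih (fun f => w f - w e * c f) hnd hfl
    have hA : (l.map (fun f => c f * x f)).sum ≤ θ - x e := by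
      refine le_trans ?_ hfe
      rw [← List.sum_map_add]
      apply List.sum_le_sum
      intro f _
      have := hx f
      simp only [c]
      split_ifs <;> first | linarith | (exfalso; tauto)
    have hB : (l.map (fun f => w f * x f)).sum
        = (l.map (fun f => (w f - w e * c f) * x f)).sum
          + w e * (l.map (fun f => c f * x f)).sum := by
      rw [← List.sum_map_mul_left, ← List.sum_map_add]
      congr 1
      apply List.map_congr_left
      intro f _
      ring
    have hC : ∃ M', DDM d (e :: l).toFinset M' ∧ 1 ≤ ∑ f ∈ M', c f ∧
        ∑ f ∈ M', (w f - w e * c f) = ∑ f ∈ M, (w f - w e * c f) := by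
      by_cases hex : ∃ f ∈ M, f.1 = e.1 ∨ (f.2 = e.2 ∧ Nat.dist f.1.val e.1.val < d)
      · obtain ⟨f, hfM, hfc⟩ := hex
        refine ⟨M, ⟨fun a ha => ?_, h2, h3⟩, ?_, rfl⟩
        · have := h1 ha
          simp at this ⊢; tauto
        · have : c f = 1 := by simp only [c]; rw [if_pos hfc]
          rw [← this]
          exact Finset.single_le_sum (fun f _ => hc0 f) hfM
      · push Not at hex
        have heM : e ∉ M := fun hh => (hex e hh).1 rfl
        refine ⟨insert e M, ⟨fun a ha => ?_, ?_, ?_⟩, ?_, ?_⟩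
        · rcases Finset.mem_insert.1 ha with rfl | ha
          · simp
          · have := h1 ha
            simp at this ⊢; tauto
        · intro a ha b hb hab
          rcases Finset.mem_insert.1 ha with rfl | ha' <;>
          rcases Finset.mem_insert.1 hb with rfl | hb'
          · rfl
          · exact absurd hab.symm (hex b hb').1
          · exact absurd hab (hex a ha').1
          · exact h2 a ha' b hb' hab
        · intro a ha b hb hab hne
          rcases Finset.mem_insert.1 ha with rfl | ha' <;>
          rcases Finset.mem_insert.1 hb with rfl | hb'
          · exact absurd rfl hne
          · rw [Nat.dist_comm]; exact (hex b hb').2 hab.symm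
          · exact (hex a ha').2 hab
          · exact h3 a ha' b hb' hab hne
        · rw [← hce]
          exact Finset.single_le_sum (fun f _ => hc0 f) (Finset.mem_insert_self e M)
        · rw [Finset.sum_insert heM, hce]; ring
    obtain ⟨M', hM', hM1, hM2⟩ := hC
    refine ⟨M', hM', ?_⟩
    rw [← hM2, Finset.sum_sub_distrib, ← Finset.mul_sum] at h
    simp only [List.map_cons, List.sum_cons]
    have i1 := mul_le_mul_of_nonneg_left hA hwe.le
    have i2 := mul_le_mul_of_nonneg_left hM1 (mul_pos hθ hwe).le
    nlinarith

/-- If a feasible solution `x` of LP1 admits a `θ`-flat order of the edges, then there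
is a `d`-distance matching `M` with `θ·w(M) ≥ Σ_e w_e x_e`. -/
theorem stmt10 {n : ℕ} {T : Type*} [DecidableEq T]
    (d : ℕ) (hd : 1 ≤ d) (E : Finset (Fin n × T))
    (w : Fin n × T → ℝ) (hw : ∀ e ∈ E, 0 ≤ w e)
    (θ : ℝ) (hθ : 0 < θ) (x : Fin n × T → ℝ) (hx : FeasLP1 d E x)
    (l : List (Fin n × T)) (hnd : l.Nodup) (hlE : l.toFinset = E)
    (hflat : IsFlatOrder d θ x l) :
    ∃ M, DDM d E M ∧ ∑ e ∈ E, w e * x e ≤ θ * ∑ e ∈ M, w e := by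
  subst hlE
  obtain ⟨M, hM, h⟩ := flat_main d θ hθ x hx.1 l w hnd hflat
  exact ⟨M, hM, by rwa [List.sum_toFinset _ hnd]⟩
end

section
/- Let l ∈ {1,2,3,4} and let M, M* be d-distance matchings such that M is l-locally optimal with respect to M*. Then |M*| ≤ ρ_l·|M|, where ρ₁=3, ρ₂=2, ρ₃=9/5, ρ₄=5/3. -/
open Finset

/-- `M` is `l`-locally optimal with respect to `M*`: there is no `X ⊆ M* ∖ M` with
`l ≥ |X| > |H(X, M)|`. -/
def LocOptWrt {n : ℕ} {T : Type*} [DecidableEq T] (d l : ℕ)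
    (M Ms : Finset (Fin n × T)) : Prop :=
  ¬ ∃ X ⊆ Ms \ M, X.card ≤ l ∧ (X.biUnion (hitSet d M)).card < X.card

theorem aux_sum {α : Type*} [DecidableEq α] (S : Finset α) (c : α → ℕ) (p q : ℕ) (hpq : p ≤ q)
    (hS : #S ≤ 3) (hq : ∀ a ∈ S, c a ≤ q)
    (h : ∀ a ∈ S, ∀ b ∈ S, p < c a → p < c b → a = b) :
    ∑ a ∈ S, c a ≤ 2 * p + q := by
  by_cases hx : ∃ a ∈ S, p < c a
  · obtain ⟨a, ha, hpa⟩ := hx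
    rw [← Finset.add_sum_erase S c ha]
    have h1 : ∑ x ∈ S.erase a, c x ≤ #(S.erase a) • p := by
      apply Finset.sum_le_card_nsmul
      intro x hx
      rw [Finset.mem_erase] at hx
      by_contra hlt
      exact hx.1 (h x hx.2 a ha (by omega) hpa)
    have h2 : #(S.erase a) ≤ 2 := by
      rw [Finset.card_erase_of_mem ha]; omega
    have h3 := hq a ha
    have h4 : #(S.erase a) * p ≤ 2 * p := Nat.mul_le_mul_right _ h2
    simp only [smul_eq_mul] at h1
    omega
  · push Not at hx
    have h1 : ∑ x ∈ S, c x ≤ #S • p := Finset.sum_le_card_nsmul _ _ _ hx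
    have h4 : #S * p ≤ 3 * p := Nat.mul_le_mul_right _ hS
    simp only [smul_eq_mul] at h1
    omega

theorem aux_charge {α β : Type*} [DecidableEq α] [DecidableEq β]
    (A : Finset α) (B : Finset β) (N : α → Finset β) (hN : ∀ a ∈ A, N a ⊆ B)
    (c : α → β → ℕ) (u v : ℕ)
    (h1 : ∀ a ∈ A, u ≤ ∑ b ∈ N a, c a b)
    (h2 : ∀ b ∈ B, ∑ a ∈ A with b ∈ N a, c a b ≤ v) :
    u * #A ≤ v * #B := by
  have e1 : #A • u ≤ ∑ a ∈ A, ∑ b ∈ N a, c a b := Finset.card_nsmul_le_sum _ _ _ h1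
  have e2 : ∑ b ∈ B, ∑ a ∈ A with b ∈ N a, c a b ≤ #B • v := Finset.sum_le_card_nsmul _ _ _ h2
  have e3 : ∑ a ∈ A, ∑ b ∈ N a, c a b = ∑ b ∈ B, ∑ a ∈ A with b ∈ N a, c a b := by
    apply Finset.sum_comm'
    intro x y
    simp only [Finset.mem_filter]
    constructor
    · rintro ⟨h, h'⟩; exact ⟨⟨h, h'⟩, hN x h h'⟩
    · rintro ⟨h, h'⟩; exact h
  simp only [smul_eq_mul] at e1 e2
  rw [mul_comm u, mul_comm v]
  omega

theorem aux_not2 {α β : Type*} [DecidableEq α] [DecidableEq β]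
    (A : Finset α) (N : α → Finset β) (l : ℕ)
    (hl : ∀ X ⊆ A, #X ≤ l → #X ≤ #(X.biUnion N))
    (X : Finset α) (Y : Finset β) (hX : X ⊆ A) (hc : #X ≤ l)
    (hY : ∀ x ∈ X, N x ⊆ Y) : #X ≤ #Y :=
  (hl X hX hc).trans (Finset.card_le_card (Finset.biUnion_subset.2 hY))

section
variable {α β : Type*} [DecidableEq α] [DecidableEq β]
    (A : Finset α) (B : Finset β) (N : α → Finset β) (hN : ∀ a ∈ A, N a ⊆ B)
    (hdeg : ∀ b ∈ B, #{a ∈ A | b ∈ N a} ≤ 3) (l : ℕ)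
    (hl : ∀ X ⊆ A, #X ≤ l → #X ≤ #(X.biUnion N))

theorem aux_pos (h : 1 ≤ l) (hl : ∀ X ⊆ A, #X ≤ l → #X ≤ #(X.biUnion N))
    (a : α) (ha : a ∈ A) : 1 ≤ #(N a) := by
  have := aux_not2 A N l hl {a} (N a) (by simpa using ha) (by simpa using h) (by simp)
  simpa using this

theorem aux_single (h : 2 ≤ l) (hl : ∀ X ⊆ A, #X ≤ l → #X ≤ #(X.biUnion N))
    (a a' : α) (b : β) (ha : a ∈ A) (ha' : a' ∈ A) (hb : N a = {b}) (hb' : N a' = {b}) :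
    a = a' := by
  by_contra hne
  have := aux_not2 A N l hl {a, a'} {b} (by grind)
    (by rw [Finset.card_pair hne]; exact h) (by grind)
  rw [Finset.card_pair hne] at this
  simp at this

theorem aux_pair (h : 3 ≤ l) (hl : ∀ X ⊆ A, #X ≤ l → #X ≤ #(X.biUnion N))
    (a x y : α) (b b' : β) (ha : a ∈ A) (hx : x ∈ A) (hy : y ∈ A) (hbb : b ≠ b')
    (hb : N a = {b, b'}) (hxb : N x = {b}) (hyb : N y = {b'}) : False := by
  have c2 := Finset.card_pair hbb
  have hax : a ≠ x := by
    rintro rfl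
    rw [hb] at hxb; rw [hxb] at c2; simp at c2
  have hay : a ≠ y := by
    rintro rfl
    rw [hb] at hyb; rw [hyb] at c2; simp at c2
  have hxy : x ≠ y := by
    rintro rfl
    rw [hxb] at hyb; exact hbb (Finset.singleton_injective hyb)
  have c3 : #{a, x, y} = 3 := Finset.card_eq_three.2 ⟨a, x, y, hax, hay, hxy, rfl⟩
  have := aux_not2 A N l hl {a, x, y} {b, b'} (by grind) (by omega) (by grind)
  omega

/-- at most one pair joins an outside vertex to the singleton vertices -/
theorem aux_two (h : 4 ≤ l) (hl : ∀ X ⊆ A, #X ≤ l → #X ≤ #(X.biUnion N))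
    (a a' x y : α) (b v w : β) (ha : a ∈ A) (ha' : a' ∈ A) (hx : x ∈ A) (hy : y ∈ A)
    (hbv : b ≠ v) (hbw : b ≠ w)
    (hb : N a = {b, v}) (hb' : N a' = {b, w}) (hxb : N x = {v}) (hyb : N y = {w}) :
    a = a' := by
  by_contra hne
  have hax : a ≠ x := by
    rintro rfl
    have : b ∈ N a := by rw [hb]; simp
    rw [hxb] at this; simp at this; exact hbv this
  have hay : a ≠ y := by
    rintro rfl
    have : b ∈ N a := by rw [hb]; simp
    rw [hyb] at this; simp at this; exact hbw this
  have hax' : a' ≠ x := by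
    rintro rfl
    have : b ∈ N a' := by rw [hb']; simp
    rw [hxb] at this; simp at this; exact hbv this
  have hay' : a' ≠ y := by
    rintro rfl
    have : b ∈ N a' := by rw [hb']; simp
    rw [hyb] at this; simp at this; exact hbw this
  by_cases hvw : v = w
  · subst hvw
    have c3 : #{a, a', x} = 3 := Finset.card_eq_three.2 ⟨a, a', x, hne, hax, hax', rfl⟩
    have := aux_not2 A N l hl {a, a', x} {b, v} (by grind) (by omega) (by grind)
    have := Finset.card_pair hbv
    omega
  · have hxy : x ≠ y := by
      rintro rfl
      rw [hxb] at hyb; exact hvw (Finset.singleton_injective hyb)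
    have c3 : #{a', x, y} = 3 := Finset.card_eq_three.2 ⟨a', x, y, hax', hay', hxy, rfl⟩
    have c4 : #{a, a', x, y} = 4 := by
      rw [Finset.card_insert_of_notMem (by grind), c3]
    have := aux_not2 A N l hl {a, a', x, y} {b, v, w} (by grind) (by omega) (by grind)
    have := Finset.card_le_three (a := b) (b := v) (c := w)
    omega

include hN hdeg

theorem aux_l1 (hl : ∀ X ⊆ A, #X ≤ 1 → #X ≤ #(X.biUnion N)) : 1 * #A ≤ 3 * #B := by
  apply aux_charge A B N hN (fun _ _ => 1)
  · intro a ha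
    simpa using aux_pos A N 1 le_rfl hl a ha
  · intro b hb
    simpa using hdeg b hb

theorem aux_l2 (hl : ∀ X ⊆ A, #X ≤ 2 → #X ≤ #(X.biUnion N)) : 2 * #A ≤ 4 * #B := by
  apply aux_charge A B N hN (fun a b => if N a = {b} then 2 else 1)
  · intro a ha
    have h1 := aux_pos A N 2 (by norm_num) hl a ha
    by_cases h2 : #(N a) = 1
    · obtain ⟨b, hb⟩ := Finset.card_eq_one.1 h2
      simp [hb]
    · have : #(N a) • 1 ≤ ∑ b ∈ N a, (if N a = {b} then 2 else 1) := by
        apply Finset.card_nsmul_le_sum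
        intro x hx
        split_ifs <;> omega
      simp only [smul_eq_mul] at this
      omega
  · intro b hb
    apply aux_sum _ _ 1 2 (by norm_num) (hdeg b hb)
    · intro a ha; split_ifs <;> omega
    · intro a ha a' ha' h h'
      have h1 : N a = {b} := by by_contra hh; simp [hh] at h
      have h2 : N a' = {b} := by by_contra hh; simp [hh] at h'
      exact aux_single A N 2 le_rfl hl a a' b (by simp at ha; exact ha.1)
        (by simp at ha'; exact ha'.1) h1 h2

open Classical in
theorem aux_l3 (hl : ∀ X ⊆ A, #X ≤ 3 → #X ≤ #(X.biUnion N)) : 5 * #A ≤ 9 * #B := by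
  apply aux_charge A B N hN (fun a b => if N a = {b} then 5 else
    if ∃ x ∈ A, N x = {b} then 2 else 3)
  · intro a ha
    have h1 := aux_pos A N 3 (by norm_num) hl a ha
    by_cases h2 : #(N a) = 1
    · obtain ⟨b, hb⟩ := Finset.card_eq_one.1 h2
      simp [hb]
    by_cases h3 : #(N a) = 2
    · obtain ⟨b, b', hbb, hb⟩ := Finset.card_eq_two.1 h3
      have k1 : N a ≠ {b} := by intro h; rw [h] at h3; simp at h3
      have k2 : N a ≠ {b'} := by intro h; rw [h] at h3; simp at h3
      have k3 : ¬ ((∃ x ∈ A, N x = {b}) ∧ (∃ x ∈ A, N x = {b'})) := by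
        rintro ⟨⟨x, hx, hxb⟩, ⟨y, hy, hyb⟩⟩
        exact aux_pair A N 3 le_rfl hl a x y b b' ha hx hy hbb hb hxb hyb
      have k4 := Finset.sum_pair (f := fun b => if N a = {b} then 5 else
        if ∃ x ∈ A, N x = {b} then 2 else 3) hbb
      rw [← hb] at k4
      rw [k4]
      simp only [k1, k2, if_false]
      split_ifs with p1 p2
      · exact absurd ⟨p1, p2⟩ k3
      all_goals omega
    · have : #(N a) • 2 ≤ ∑ b ∈ N a, (if N a = {b} then 5 else
          if ∃ x ∈ A, N x = {b} then 2 else 3) := by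
        apply Finset.card_nsmul_le_sum
        intro x hx
        split_ifs <;> omega
      simp only [smul_eq_mul] at this
      omega
  · intro b hb
    by_cases hv : ∃ x ∈ A, N x = {b}
    · simp only [hv, if_true]
      apply aux_sum _ _ 2 5 (by norm_num) (hdeg b hb)
      · intro a ha; split_ifs <;> omega
      · intro a ha a' ha' h h'
        have h1 : N a = {b} := by by_contra hh; simp [hh] at h
        have h2 : N a' = {b} := by by_contra hh; simp [hh] at h'
        exact aux_single A N 3 (by norm_num) hl a a' b (by simp at ha; exact ha.1)
          (by simp at ha'; exact ha'.1) h1 h2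
    · simp only [hv, if_false]
      have key : ∀ a ∈ A.filter (fun a => b ∈ N a), (if N a = {b} then 5 else 3) ≤ 3 := by
        intro a ha
        rw [if_neg]
        intro h
        exact hv ⟨a, (Finset.mem_filter.1 ha).1, h⟩
      apply aux_sum _ _ 3 3 (by norm_num) (hdeg b hb) key
      intro a ha a' ha' h h'
      exact absurd (key a ha) (by omega)

open Classical in
theorem aux_l4 (hl : ∀ X ⊆ A, #X ≤ 4 → #X ≤ #(X.biUnion N)) : 6 * #A ≤ 10 * #B := by
  apply aux_charge A B N hN (fun a b => if N a = {b} then 6 else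
    if ∃ x ∈ A, N x = {b} then 2 else
    if ∃ v, b ≠ v ∧ N a = {b, v} ∧ ∃ x ∈ A, N x = {v} then 4 else 3)
  · intro a ha
    have h1 := aux_pos A N 4 (by norm_num) hl a ha
    by_cases h2 : #(N a) = 1
    · obtain ⟨b, hb⟩ := Finset.card_eq_one.1 h2
      simp [hb]
    by_cases h3 : #(N a) = 2
    · obtain ⟨b, b', hbb, hb⟩ := Finset.card_eq_two.1 h3
      have k1 : N a ≠ {b} := by intro h; rw [h] at h3; simp at h3
      have k2 : N a ≠ {b'} := by intro h; rw [h] at h3; simp at h3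
      have k3 : ¬ ((∃ x ∈ A, N x = {b}) ∧ (∃ x ∈ A, N x = {b'})) := by
        rintro ⟨⟨x, hx, hxb⟩, ⟨y, hy, hyb⟩⟩
        exact aux_pair A N 4 (by norm_num) hl a x y b b' ha hx hy hbb hb hxb hyb
      have k4 := Finset.sum_pair (f := fun b => if N a = {b} then 6 else
        if ∃ x ∈ A, N x = {b} then 2 else
        if ∃ v, b ≠ v ∧ N a = {b, v} ∧ ∃ x ∈ A, N x = {v} then 4 else 3) hbb
      rw [← hb] at k4
      rw [k4]
      simp only [k1, k2, if_false]
      by_cases p1 : ∃ x ∈ A, N x = {b}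
      · have p2 : ¬ ∃ x ∈ A, N x = {b'} := fun p2 => k3 ⟨p1, p2⟩
        have p3 : ∃ v, b' ≠ v ∧ N a = {b', v} ∧ ∃ x ∈ A, N x = {v} :=
          ⟨b, hbb.symm, by rw [hb, Finset.pair_comm], p1⟩
        rw [if_pos p1, if_neg p2, if_pos p3]
      · rw [if_neg p1]
        by_cases p2 : ∃ x ∈ A, N x = {b'}
        · have p3 : ∃ v, b ≠ v ∧ N a = {b, v} ∧ ∃ x ∈ A, N x = {v} := ⟨b', hbb, hb, p2⟩
          rw [if_pos p2, if_pos p3]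
        · rw [if_neg p2]
          split_ifs <;> omega
    · have : #(N a) • 2 ≤ ∑ b ∈ N a, (if N a = {b} then 6 else
          if ∃ x ∈ A, N x = {b} then 2 else
          if ∃ v, b ≠ v ∧ N a = {b, v} ∧ ∃ x ∈ A, N x = {v} then 4 else 3) := by
        apply Finset.card_nsmul_le_sum
        intro x hx
        split_ifs <;> omega
      simp only [smul_eq_mul] at this
      omega
  · intro b hb
    by_cases hv : ∃ x ∈ A, N x = {b}
    · simp only [hv, if_true]
      apply aux_sum _ _ 2 6 (by norm_num) (hdeg b hb)
      · intro a ha; split_ifs <;> omega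
      · intro a ha a' ha' h h'
        have h1 : N a = {b} := by by_contra hh; simp [hh] at h
        have h2 : N a' = {b} := by by_contra hh; simp [hh] at h'
        exact aux_single A N 4 (by norm_num) hl a a' b (by simp at ha; exact ha.1)
          (by simp at ha'; exact ha'.1) h1 h2
    · simp only [hv, if_false]
      have key : ∀ a ∈ A.filter (fun a => b ∈ N a), N a ≠ {b} := by
        intro a ha h
        exact hv ⟨a, (Finset.mem_filter.1 ha).1, h⟩
      apply aux_sum _ _ 3 4 (by norm_num) (hdeg b hb)
      · intro a ha
        rw [if_neg (key a ha)]
        split_ifs <;> omega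
      · intro a ha a' ha' h h'
        rw [if_neg (key a ha)] at h
        rw [if_neg (key a' ha')] at h'
        have h1 : ∃ v, b ≠ v ∧ N a = {b, v} ∧ ∃ x ∈ A, N x = {v} := by
          by_contra hh; rw [if_neg hh] at h; omega
        have h2 : ∃ v, b ≠ v ∧ N a' = {b, v} ∧ ∃ x ∈ A, N x = {v} := by
          by_contra hh; rw [if_neg hh] at h'; omega
        obtain ⟨v, hbv, hav, x, hx, hxv⟩ := h1
        obtain ⟨w, hbw, haw, y, hy, hyw⟩ := h2
        exact aux_two A N 4 le_rfl hl a a' x y b v w (Finset.mem_filter.1 ha).1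
          (Finset.mem_filter.1 ha').1 hx hy hbv hbw hav haw hxv hyw

end

theorem aux_deg {n : ℕ} {T : Type*} [DecidableEq T] (d : ℕ) (E M Ms : Finset (Fin n × T))
    (hMs : DDM d E Ms) (f : Fin n × T) :
    #{e ∈ Ms \ M | f ∈ hitSet d M e} ≤ 3 := by
  obtain ⟨-, h1, h2⟩ := hMs
  let P1 := Ms.filter (fun e => e.1 = f.1)
  let P2 := Ms.filter (fun e => e.2 = f.2 ∧ e.1.val < f.1.val ∧ f.1.val < e.1.val + d)
  let P3 := Ms.filter (fun e => e.2 = f.2 ∧ f.1.val < e.1.val ∧ e.1.val < f.1.val + d)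
  have hsub : (Ms \ M).filter (fun e => f ∈ hitSet d M e) ⊆ P1 ∪ (P2 ∪ P3) := by
    intro e he
    simp only [hitSet, mem_filter, mem_sdiff, mem_erase] at he
    simp only [P1, P2, P3, mem_union, mem_filter]
    obtain ⟨⟨he, -⟩, -, -, h | ⟨h, hne, hd⟩⟩ := he
    · exact Or.inl ⟨he, h.symm⟩
    · right
      have : f.1.val ≠ e.1.val := fun h => hne (Fin.ext h)
      simp only [Nat.dist] at hd
      rcases lt_or_gt_of_ne this with h' | h'
      · right; exact ⟨he, h.symm, h', by omega⟩
      · left; exact ⟨he, h.symm, h', by omega⟩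
  have c1 : #P1 ≤ 1 := by
    rw [Finset.card_le_one]
    intro a ha b hb
    simp only [P1, mem_filter] at ha hb
    exact h1 a ha.1 b hb.1 (ha.2.trans hb.2.symm)
  have c2 : #P2 ≤ 1 := by
    rw [Finset.card_le_one]
    intro a ha b hb
    simp only [P2, mem_filter] at ha hb
    by_contra hne
    have := h2 a ha.1 b hb.1 (ha.2.1.trans hb.2.1.symm) hne
    simp only [Nat.dist] at this
    omega
  have c3 : #P3 ≤ 1 := by
    rw [Finset.card_le_one]
    intro a ha b hb
    simp only [P3, mem_filter] at ha hb
    by_contra hne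
    have := h2 a ha.1 b hb.1 (ha.2.1.trans hb.2.1.symm) hne
    simp only [Nat.dist] at this
    omega
  have := Finset.card_le_card hsub
  have := Finset.card_union_le P1 (P2 ∪ P3)
  have := Finset.card_union_le P2 P3
  omega

theorem aux_hit {n : ℕ} {T : Type*} [DecidableEq T] (d : ℕ) (E M Ms : Finset (Fin n × T))
    (hMs : DDM d E Ms) : ∀ e ∈ Ms \ M, hitSet d M e ⊆ M \ Ms := by
  obtain ⟨-, h1, h2⟩ := hMs
  intro e he f hf
  simp only [hitSet, mem_filter, mem_sdiff, mem_erase] at he hf ⊢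
  obtain ⟨hne, hf, h⟩ := hf
  refine ⟨hf, fun hfs => ?_⟩
  rcases h with h | ⟨h, -, hd⟩
  · exact hne (h1 f hfs e he.1 h)
  · have := h2 f hfs e he.1 h hne
    omega

/-- If `M` is `l`-locally optimal with respect to `M*` for `l ∈ {1,2,3,4}`, then
`|M*| ≤ ρ_l·|M|` where `ρ₁ = 3`, `ρ₂ = 2`, `ρ₃ = 9/5`, `ρ₄ = 5/3`. -/
theorem stmt14 {n : ℕ} {T : Type*} [DecidableEq T]
    (d l : ℕ) (hd : 1 ≤ d) (E M Ms : Finset (Fin n × T))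
    (hM : DDM d E M) (hMs : DDM d E Ms) (hloc : LocOptWrt d l M Ms)
    (ρ : ℝ)
    (hρ : (l = 1 ∧ ρ = 3) ∨ (l = 2 ∧ ρ = 2) ∨ (l = 3 ∧ ρ = 9 / 5) ∨
      (l = 4 ∧ ρ = 5 / 3)) :
    (Ms.card : ℝ) ≤ ρ * M.card := by
  have hN := aux_hit d E M Ms hMs
  have hdeg : ∀ f ∈ M \ Ms, #{e ∈ Ms \ M | f ∈ hitSet d M e} ≤ 3 :=
    fun f _ => aux_deg d E M Ms hMs f
  have hl : ∀ X ⊆ Ms \ M, #X ≤ l → #X ≤ #(X.biUnion (hitSet d M)) := by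
    intro X hX hc
    by_contra h
    exact hloc ⟨X, hX, hc, by omega⟩
  have e1 := Finset.card_sdiff_add_card_inter Ms M
  have e2 := Finset.card_sdiff_add_card_inter M Ms
  rw [Finset.inter_comm] at e2
  rcases hρ with ⟨rfl, rfl⟩ | ⟨rfl, rfl⟩ | ⟨rfl, rfl⟩ | ⟨rfl, rfl⟩
  · have h := aux_l1 _ _ _ hN hdeg hl
    have : #Ms ≤ 3 * #M := by omega
    exact_mod_cast this
  · have h := aux_l2 _ _ _ hN hdeg hl
    have : #Ms ≤ 2 * #M := by omega
    exact_mod_cast this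
  · have h := aux_l3 _ _ _ hN hdeg hl
    have : 5 * #Ms ≤ 9 * #M := by omega
    have : (5 : ℝ) * #Ms ≤ 9 * #M := by exact_mod_cast this
    linarith
  · have h := aux_l4 _ _ _ hN hdeg hl
    have : 3 * #Ms ≤ 5 * #M := by omega
    have : (3 : ℝ) * #Ms ≤ 5 * #M := by exact_mod_cast this
    linarith
end

section
/- Let l ≥ 1 and let M be an l-locally optimal d-distance matching of G. Then |M*| ≤ ρ_l·|M| for every d-distance matching M* of G (in particular for a maximum-cardinality one), where ρ_l is defined by ρ₁=3, ρ₂=2, and ρ_l = (4ρ_{l−2}−3)/(2ρ_{l−2}−1) for l ≥ 3. -/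
open Finset

/-- `M` is `l`-locally optimal: there is no `d`-distance matching `X ⊆ E ∖ M` with
`l ≥ |X| > |H(X, M)|`. -/
def LocOpt {n : ℕ} {T : Type*} [DecidableEq T] (d l : ℕ)
    (E M : Finset (Fin n × T)) : Prop :=
  ¬ ∃ X, DDM d E X ∧ X ⊆ E \ M ∧ X.card ≤ l ∧ (X.biUnion (hitSet d M)).card < X.card

/-- The sequence `ρ₁ = 3`, `ρ₂ = 2`, `ρ_l = (4ρ_{l−2} − 3)/(2ρ_{l−2} − 1)` for `l ≥ 3`. -/
noncomputable def rho : ℕ → ℝ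
  | 0 => 3
  | 1 => 3
  | 2 => 2
  | l + 3 => (4 * rho (l + 1) - 3) / (2 * rho (l + 1) - 1)

noncomputable def wt (r : ℝ) (c : ℕ) : ℝ := if c = 1 then 1 else max 0 (2 - r)

lemma rho_ge : ∀ l, (3/2 : ℝ) ≤ rho l
  | 0 => by norm_num [rho]
  | 1 => by norm_num [rho]
  | 2 => by norm_num [rho]
  | l + 3 => by
    have h := rho_ge (l + 1)
    rw [rho, le_div_iff₀ (by linarith)]
    linarith

/-- the combinatorial step: removing singletons -/
lemma peel {ι α : Type*} [DecidableEq ι] [DecidableEq α] (t : ℕ) (I Sg K : Finset ι)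
    (N : ι → Finset α) (c c' : ι → ℕ)
    (hP : ∀ J ⊆ I, ∑ i ∈ J, c i ≤ t + 2 → J.card ≤ (J.biUnion N).card)
    (hSg : ∀ i ∈ Sg, i ∈ I ∧ c i = 1 ∧ (N i).card = 1)
    (hK : K ⊆ I) (hdis : Disjoint K Sg)
    (hc : ∀ i ∈ K, c i + (N i).card ≤ c' i + 2) (hinj : ∀ S ⊆ Sg, (S.biUnion N).card = S.card) :
    ∀ J ⊆ K, ∑ i ∈ J, c' i ≤ t → J.card ≤ (J.biUnion (fun i => N i \ Sg.biUnion N)).card := by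
  intro J
  induction J using Finset.strongInduction with
  | H J ih =>
  intro hJ hs
  by_contra hlt
  push Not at hlt
  set V1 := Sg.biUnion N with hV1
  set U := J.biUnion (fun i => N i \ V1) with hU
  have hsub : ∀ i ∈ J, (J.erase i).card ≤ ((J.erase i).biUnion (fun i => N i \ V1)).card := by
    intro i hi
    refine ih _ (Finset.erase_ssubset hi) ((Finset.erase_subset _ _).trans hJ) ?_
    exact (Finset.sum_le_sum_of_subset (Finset.erase_subset i J)).trans hs
  have hne : J.Nonempty := by
    rw [← Finset.card_pos]; omega
  have hU1 : J.card ≤ U.card + 1 := by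
    obtain ⟨i, hi⟩ := hne
    have h1 := hsub i hi
    have h2 : ((J.erase i).biUnion (fun i => N i \ V1)).card ≤ U.card :=
      Finset.card_le_card (Finset.biUnion_subset_biUnion_of_subset_left _ (Finset.erase_subset _ _))
    rw [Finset.card_erase_of_mem hi] at h1
    omega
  have hdeg : ∀ u ∈ U, 2 ≤ (J.filter (fun i => u ∈ N i \ V1)).card := by
    intro u hu
    by_contra hcon
    push Not at hcon
    obtain ⟨i, hi, hui⟩ := Finset.mem_biUnion.1 hu
    have h1 := hsub i hi
    have h2 : (J.erase i).biUnion (fun i => N i \ V1) ⊆ U.erase u := by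
      intro v hv
      obtain ⟨j, hj, hvj⟩ := Finset.mem_biUnion.1 hv
      have hj' := Finset.mem_erase.1 hj
      refine Finset.mem_erase.2 ⟨?_, Finset.mem_biUnion.2 ⟨j, hj'.2, hvj⟩⟩
      rintro rfl
      have := Finset.card_le_one.1 (by omega : (J.filter (fun i => v ∈ N i \ V1)).card ≤ 1)
        j (Finset.mem_filter.2 ⟨hj'.2, hvj⟩) i (Finset.mem_filter.2 ⟨hi, hui⟩)
      exact hj'.1 this
    have h3 := Finset.card_le_card h2
    have hpos : 0 < U.card := Finset.card_pos.2 ⟨u, hu⟩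
    rw [Finset.card_erase_of_mem hi] at h1
    rw [Finset.card_erase_of_mem hu] at h3
    have : 0 < J.card := Finset.card_pos.2 hne
    omega
  have hsum : 2 * U.card ≤ ∑ i ∈ J, (N i \ V1).card := by
    have h1 : ∑ i ∈ J, (N i \ V1).card = ∑ u ∈ U, (J.filter (fun i => u ∈ N i \ V1)).card := by
      have := Finset.sum_card_bipartiteAbove_eq_sum_card_bipartiteBelow
        (s := J) (t := U) (fun i u => u ∈ N i \ V1)
      rw [Finset.sum_congr rfl (fun i hi => ?_)]
      · exact this
      · congr 1
        ext u
        simp only [Finset.bipartiteAbove, Finset.mem_filter]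
        exact ⟨fun h => ⟨Finset.mem_biUnion.2 ⟨i, hi, h⟩, h⟩, fun h => h.2⟩
    rw [h1, mul_comm]
    simpa using Finset.card_nsmul_le_sum U _ 2 hdeg
  set W := J.biUnion (fun i => N i ∩ V1) with hW
  have hWc : W.card ≤ ∑ i ∈ J, (N i ∩ V1).card := Finset.card_biUnion_le
  have hsplit : ∑ i ∈ J, (N i).card = ∑ i ∈ J, (N i ∩ V1).card + ∑ i ∈ J, (N i \ V1).card := by
    rw [← Finset.sum_add_distrib]
    exact Finset.sum_congr rfl fun i _ => (Finset.card_inter_add_card_sdiff _ _).symm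
  set SW := Sg.filter (fun i => N i ⊆ W) with hSW
  have hSWs : SW ⊆ Sg := Finset.filter_subset _ _
  have hSWW : SW.biUnion N = W := by
    ext v
    constructor
    · intro hv
      obtain ⟨i, hi, hvi⟩ := Finset.mem_biUnion.1 hv
      exact (Finset.mem_filter.1 hi).2 hvi
    · intro hv
      obtain ⟨j, hj, hvj⟩ := Finset.mem_biUnion.1 hv
      obtain ⟨i, hi, hvi⟩ := Finset.mem_biUnion.1 (Finset.mem_inter.1 hvj).2
      refine Finset.mem_biUnion.2 ⟨i, Finset.mem_filter.2 ⟨hi, ?_⟩, hvi⟩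
      obtain ⟨a, ha⟩ := Finset.card_eq_one.1 (hSg i hi).2.2
      rw [ha] at hvi ⊢
      rw [Finset.mem_singleton] at hvi
      subst hvi
      simpa using hv
  have hcard : W.card = SW.card := by rw [← hSWW]; exact hinj SW hSWs
  have hdj : Disjoint J SW := (hdis.mono_left hJ).mono_right hSWs
  have hcost : ∑ i ∈ J ∪ SW, c i ≤ t + 2 := by
    rw [Finset.sum_union hdj]
    have h1 : ∑ i ∈ SW, c i = SW.card := by
      rw [Finset.sum_congr rfl (fun i hi => (hSg i (hSWs hi)).2.1)]; simp
    have h2 : ∑ i ∈ J, (c i + (N i).card) ≤ ∑ i ∈ J, (c' i + 2) :=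
      Finset.sum_le_sum fun i hi => hc i (hJ hi)
    simp only [Finset.sum_add_distrib, Finset.sum_const, smul_eq_mul] at h2
    omega
  have hfin := hP (J ∪ SW)
    (Finset.union_subset (hJ.trans hK) (fun i hi => (hSg i (hSWs hi)).1)) hcost
  rw [Finset.card_union_of_disjoint hdj] at hfin
  have hsubs : (J ∪ SW).biUnion N ⊆ U ∪ W := by
    intro v hv
    obtain ⟨i, hi, hvi⟩ := Finset.mem_biUnion.1 hv
    rcases Finset.mem_union.1 hi with hi | hi
    · by_cases h : v ∈ V1
      · exact Finset.mem_union_right _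
          (Finset.mem_biUnion.2 ⟨i, hi, Finset.mem_inter.2 ⟨hvi, h⟩⟩)
      · exact Finset.mem_union_left _
          (Finset.mem_biUnion.2 ⟨i, hi, Finset.mem_sdiff.2 ⟨hvi, h⟩⟩)
    · exact Finset.mem_union_right _ (hSWW ▸ Finset.mem_biUnion.2 ⟨i, hi, hvi⟩)
  have := (Finset.card_le_card hsubs).trans (Finset.card_union_le _ _)
  omega

lemma deg_sum {ι α : Type*} [DecidableEq ι] [DecidableEq α] (I : Finset ι)
    (N : ι → Finset α) (V : Finset α) (hV : ∀ i ∈ I, N i ⊆ V)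
    (hdeg : ∀ v ∈ V, (I.filter (fun i => v ∈ N i)).card ≤ 3) :
    ∑ i ∈ I, (N i).card ≤ 3 * V.card := by
  have := Finset.sum_card_bipartiteAbove_eq_sum_card_bipartiteBelow
        (s := I) (t := V) (fun i u => u ∈ N i)
  rw [Finset.sum_congr rfl (fun i hi => ?_)]
  · rw [this, mul_comm]
    have h := Finset.sum_le_card_nsmul V _ 3 hdeg
    rwa [smul_eq_mul] at h
  · congr 1
    ext u
    simp only [Finset.bipartiteAbove, Finset.mem_filter]
    exact ⟨fun h => ⟨hV i hi h, h⟩, fun h => h.2⟩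

lemma singles_inj {ι α : Type*} [DecidableEq ι] [DecidableEq α] (t : ℕ) (ht : 2 ≤ t)
    (I Sg : Finset ι) (N : ι → Finset α) (c : ι → ℕ)
    (hP : ∀ J ⊆ I, ∑ i ∈ J, c i ≤ t → J.card ≤ (J.biUnion N).card)
    (hSg : ∀ i ∈ Sg, i ∈ I ∧ c i = 1 ∧ (N i).card = 1) :
    ∀ S ⊆ Sg, (S.biUnion N).card = S.card := by
  intro S hS
  rw [Finset.card_biUnion]
  · rw [Finset.sum_congr rfl (fun i hi => (hSg i (hS hi)).2.2)]; simp
  · intro i hi j hj hij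
    obtain ⟨hiI, hci, hi1⟩ := hSg i (hS hi)
    obtain ⟨hjI, hcj, hj1⟩ := hSg j (hS hj)
    obtain ⟨a, ha⟩ := Finset.card_eq_one.1 hi1
    obtain ⟨b, hb⟩ := Finset.card_eq_one.1 hj1
    change Disjoint (N i) (N j)
    rw [ha, hb, Finset.disjoint_singleton]
    rintro rfl
    have := hP {i, j} (by intro k; simp; rintro (rfl | rfl) <;> assumption)
      (by rw [Finset.sum_pair hij]; omega)
    rw [Finset.card_pair hij] at this
    simp [ha, hb] at this

lemma main_bound {ι α : Type*} [DecidableEq ι] [DecidableEq α] : ∀ (t : ℕ) (I : Finset ι)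
    (N : ι → Finset α) (c : ι → ℕ) (V : Finset α) (_ : ∀ i ∈ I, N i ⊆ V)
    (_ : ∀ v ∈ V, (I.filter (fun i => v ∈ N i)).card ≤ 3)
    (_ : ∀ i ∈ I, c i = 1 ∨ c i = 2)
    (_ : ∀ J ⊆ I, ∑ i ∈ J, c i ≤ t + 1 → J.card ≤ (J.biUnion N).card),
    ∑ i ∈ I, wt (rho (t + 1)) (c i) ≤ rho (t + 1) * V.card
  | 0, I, N, c, V, hV, hdeg, hc, hP => by
    have hs := deg_sum I N V hV hdeg
    have h1 : ∑ i ∈ I, wt (rho (0 + 1)) (c i) ≤ ∑ i ∈ I, ((N i).card : ℝ) := by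
      refine Finset.sum_le_sum fun i hi => ?_
      rcases hc i hi with h | h
      · have := hP {i} (by simpa using hi) (by simp [h])
        simp only [Finset.card_singleton, Finset.singleton_biUnion] at this
        simp only [wt, h, if_true]
        exact_mod_cast this
      · simp only [wt, h, rho]
        norm_num
    have h2 : ∑ i ∈ I, ((N i).card : ℝ) ≤ 3 * V.card := by exact_mod_cast hs
    calc _ ≤ _ := h1
      _ ≤ _ := h2
      _ = _ := by simp [rho]
  | 1, I, N, c, V, hV, hdeg, hc, hP => by
    have hs := deg_sum I N V hV hdeg
    set Sg := I.filter (fun i => c i = 1 ∧ (N i).card = 1) with hSgd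
    have hSg : ∀ i ∈ Sg, i ∈ I ∧ c i = 1 ∧ (N i).card = 1 := fun i hi => Finset.mem_filter.1 hi
    have hinj := singles_inj 2 le_rfl I Sg N c hP hSg Sg subset_rfl
    have hSV : Sg.card ≤ V.card := by
      rw [← hinj]
      exact Finset.card_le_card (Finset.biUnion_subset.2 fun i hi => hV i (hSg i hi).1)
    have h1 : ∑ i ∈ I, wt (rho (1 + 1)) (c i) ≤
        ∑ i ∈ I, (((N i).card : ℝ) / 2 + (if c i = 1 ∧ (N i).card = 1 then 1 else 0) / 2) := by
      refine Finset.sum_le_sum fun i hi => ?_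
      rcases hc i hi with h | h
      · have := hP {i} (by simpa using hi) (by simp [h])
        simp only [Finset.card_singleton, Finset.singleton_biUnion] at this
        simp only [wt, h, if_true, true_and]
        by_cases h1 : (N i).card = 1
        · simp [h1]; norm_num
        · have : (2:ℝ) ≤ (N i).card := by exact_mod_cast (by omega : 2 ≤ (N i).card)
          simp [h1]; linarith
      · simp only [wt, h, rho]
        norm_num
        positivity
    rw [Finset.sum_add_distrib, ← Finset.sum_div, ← Finset.sum_div, Finset.sum_boole] at h1
    have h2 : ∑ i ∈ I, ((N i).card : ℝ) ≤ 3 * V.card := by exact_mod_cast hs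
    have h3 : (Sg.card : ℝ) ≤ V.card := by exact_mod_cast hSV
    have h4 : rho (1 + 1) = 2 := by norm_num [rho]
    rw [h4] at h1 ⊢
    linarith
  | t + 2, I, N, c, V, hV, hdeg, hc, hP => by
    have hs := deg_sum I N V hV hdeg
    set Sg := I.filter (fun i => c i = 1 ∧ (N i).card = 1) with hSgd
    have hSg : ∀ i ∈ Sg, i ∈ I ∧ c i = 1 ∧ (N i).card = 1 := fun i hi => Finset.mem_filter.1 hi
    have hinj := singles_inj (t + 2 + 1) (by omega) I Sg N c hP hSg
    set V1 := Sg.biUnion N with hV1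
    have hV1V : V1 ⊆ V := Finset.biUnion_subset.2 fun i hi => hV i (hSg i hi).1
    set K := I.filter (fun i => (c i = 1 ∧ ((N i).card = 2 ∨ (N i).card = 3)) ∨
      (c i = 2 ∧ (N i).card ≤ 2)) with hKd
    have hKI : K ⊆ I := Finset.filter_subset _ _
    set c' : ι → ℕ := fun i => if c i = 1 ∧ (N i).card = 3 then 2 else c i with hc'
    have hdis : Disjoint K Sg := by
      rw [Finset.disjoint_left]
      intro i hi hi'
      have h1 := (Finset.mem_filter.1 hi).2
      have h2 := (Finset.mem_filter.1 hi').2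
      omega
    have hpeel := peel (t + 1) I Sg K N c c' (by simpa [add_assoc, add_comm, add_left_comm] using hP)
      hSg hKI hdis (by
        intro i hi
        have h1 := (Finset.mem_filter.1 hi).2
        simp only [hc']
        split_ifs <;> omega) hinj
    have ih := main_bound t K (fun i => N i \ V1) c' (V \ V1)
      (fun i hi => Finset.sdiff_subset_sdiff (hV i (hKI hi)) subset_rfl)
      (by
        intro v hv
        refine le_trans (Finset.card_le_card ?_) (hdeg v (Finset.mem_sdiff.1 hv).1)
        intro i hi
        have := Finset.mem_filter.1 hi
        exact Finset.mem_filter.2 ⟨hKI this.1, (Finset.mem_sdiff.1 this.2).1⟩)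
      (by
        intro i hi
        have := hc i (hKI hi)
        simp only [hc']
        split_ifs
        · right; rfl
        · exact this)
      hpeel
    have hr : rho (t + 2 + 1) = (4 * rho (t + 1) - 3) / (2 * rho (t + 1) - 1) := by
      rw [show t + 2 + 1 = t + 3 from rfl, rho]
    have hrge := rho_ge (t + 1)
    rw [hr]
    set r := rho (t + 1) with hrdef
    have hpos : 0 < 2 * r - 1 := by linarith
    set y := 1 / (2 * r - 1) with hy
    set x := (r - 1) / (2 * r - 1) with hx
    have hposne : 2 * r - 1 ≠ 0 := ne_of_gt hpos
    have hxy : x + y * r = 1 := by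
      rw [hx, hy, div_mul_eq_mul_div, ← add_div, div_eq_one_iff_eq hposne]; ring
    have h2xy : 2 * x + y = 1 := by rw [hx, hy]; field_simp; ring
    have hrr : (4 * r - 3) / (2 * r - 1) = 3 * x + r * y := by rw [hx, hy]; field_simp; ring
    have hy0 : 0 < y := by positivity
    have hx4 : 1 / 4 ≤ x := by rw [hx, le_div_iff₀ hpos]; linarith
    have hy2 : y ≤ 1 / 2 := by linarith
    rw [hrr]
    have hkey : ∑ i ∈ I, wt (3 * x + r * y) (c i) ≤
        ∑ i ∈ I, (x * (N i).card + y * (r * (if c i = 1 ∧ (N i).card = 1 then 1 else 0) +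
          (if (c i = 1 ∧ ((N i).card = 2 ∨ (N i).card = 3)) ∨
      (c i = 2 ∧ (N i).card ≤ 2) then wt r (c' i) else 0))) := by
      refine Finset.sum_le_sum fun i hi => ?_
      have hm0 : 0 ≤ max 0 (2 - r) := le_max_left _ _
      have hm1 : 2 - r ≤ max 0 (2 - r) := le_max_right _ _
      have hpos1 : 1 ≤ (N i).card := by
        have := hP {i} (by simpa using hi) (by
          have := hc i hi
          simp only [Finset.sum_singleton]; omega)
        simpa using this
      rcases hc i hi with h | h
      · rcases (by omega : (N i).card = 1 ∨ (N i).card = 2 ∨ (N i).card = 3 ∨ 4 ≤ (N i).card)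
          with h1 | h1 | h1 | h1
        · simp [wt, h, h1]; linarith
        · simp [wt, h, h1, hc']; linarith
        · simp only [wt, h, h1, hc']
          norm_num
          nlinarith
        · have h4 : (4:ℝ) ≤ (N i).card := by exact_mod_cast h1
          have : (N i).card ≠ 1 := by omega
          have : (N i).card ≠ 2 := by omega
          have : (N i).card ≠ 3 := by omega
          simp [wt, h, *]
          nlinarith
      · by_cases h1 : (N i).card ≤ 2
        · simp only [wt, h, h1, hc']
          norm_num
          have h4 : (1:ℝ) ≤ (N i).card := by exact_mod_cast hpos1
          constructor
          · positivity
          · nlinarith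
        · have h4 : (3:ℝ) ≤ (N i).card := by exact_mod_cast (by omega : 3 ≤ (N i).card)
          simp only [wt, h, h1, hc']
          norm_num
          constructor
          · positivity
          · nlinarith
    rw [Finset.sum_add_distrib, ← Finset.mul_sum, ← Finset.mul_sum, Finset.sum_add_distrib,
      ← Finset.mul_sum, Finset.sum_boole, ← Finset.sum_filter] at hkey
    have h2 : ∑ i ∈ I, ((N i).card : ℝ) ≤ 3 * V.card := by exact_mod_cast hs
    have hV1c : V1.card = Sg.card := hinj Sg subset_rfl
    have h5 : ((V \ V1).card : ℝ) = V.card - Sg.card := by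
      rw [Finset.card_sdiff_of_subset hV1V, Nat.cast_sub (Finset.card_le_card hV1V), hV1c]
    rw [h5] at ih
    refine hkey.trans ?_
    have h6 := mul_le_mul_of_nonneg_left h2 (by linarith : 0 ≤ x)
    have h7 := mul_le_mul_of_nonneg_left ih hy0.le
    rw [mul_add y]
    linarith

/-- If `M` is an `l`-locally optimal `d`-distance matching, then `|M*| ≤ ρ_l·|M|` for
every `d`-distance matching `M*`. -/
theorem stmt16 {n : ℕ} {T : Type*} [DecidableEq T]
    (d l : ℕ) (hd : 1 ≤ d) (hl : 1 ≤ l) (E M : Finset (Fin n × T))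
    (hM : DDM d E M) (hloc : LocOpt d l E M) :
    ∀ Ms, DDM d E Ms → (Ms.card : ℝ) ≤ rho l * M.card := by
  intro Ms hMs
  obtain ⟨t, rfl⟩ : ∃ t, l = t + 1 := ⟨l - 1, by omega⟩
  have key := main_bound t (Ms \ M) (hitSet d M) (fun _ => 1) (M \ Ms)
    (by
      intro e he f hf
      simp only [hitSet, Finset.mem_erase, Finset.mem_filter] at hf
      obtain ⟨hne, hfM, hcf⟩ := hf
      have heM := (Finset.mem_sdiff.1 he).1
      refine Finset.mem_sdiff.2 ⟨hfM, fun hfMs => ?_⟩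
      rcases hcf with h | ⟨h, -, h3⟩
      · exact hne (hMs.2.1 f hfMs e heM h)
      · have := hMs.2.2 f hfMs e heM h hne
        omega)
    (by
      intro v hv
      have : ((Finset.range 3).card) = 3 := by simp
      rw [← this]
      refine Finset.card_le_card_of_injOn
        (fun e => if e.1 = v.1 then 0 else if e.1.val < v.1.val then 1 else 2) ?_ ?_
      · intro e _
        simp only [Finset.coe_range, Set.mem_Iio]
        split_ifs <;> omega
      · intro e he f hf hef
        simp only [Finset.coe_filter, Set.mem_ofPred_eq, hitSet, Finset.mem_erase,
          Finset.mem_filter, Finset.mem_sdiff] at he hf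
        obtain ⟨⟨heM, -⟩, -, -, he⟩ := he
        obtain ⟨⟨hfM, -⟩, -, -, hf⟩ := hf
        by_contra hne
        have h1 := hMs.2.1 e heM f hfM
        have h2 := hMs.2.2 e heM f hfM
        simp only [Nat.dist, Fin.ext_iff, ne_eq] at *
        by_cases ha : e.1.val = v.1.val
        · by_cases hb : f.1.val = v.1.val
          · exact hne (h1 (by omega))
          · simp only [ha, hb, if_true, if_false] at hef
            split_ifs at hef
        · by_cases hb : f.1.val = v.1.val
          · simp only [ha, hb, if_true, if_false] at hef
            split_ifs at hef
          · simp only [ha, hb, if_false] at hef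
            have he' := he.resolve_left (fun h => ha h.symm)
            have hf' := hf.resolve_left (fun h => hb h.symm)
            have h3 := h2 (he'.1.symm.trans hf'.1) hne
            split_ifs at hef <;> omega)
    (by intro i _; left; rfl)
    (by
      intro J hJ hs
      by_contra hlt
      push Not at hlt
      refine hloc ⟨J, ⟨?_, ?_, ?_⟩, ?_, by simpa using hs, hlt⟩
      · exact fun e he => hMs.1 (Finset.mem_sdiff.1 (hJ he)).1
      · exact fun e he f hf => hMs.2.1 e (Finset.mem_sdiff.1 (hJ he)).1 f
          (Finset.mem_sdiff.1 (hJ hf)).1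
      · exact fun e he f hf => hMs.2.2 e (Finset.mem_sdiff.1 (hJ he)).1 f
          (Finset.mem_sdiff.1 (hJ hf)).1
      · exact fun e he => Finset.mem_sdiff.2
          ⟨hMs.1 (Finset.mem_sdiff.1 (hJ he)).1, (Finset.mem_sdiff.1 (hJ he)).2⟩)
  simp only [wt, if_true, Finset.sum_const, nsmul_eq_mul, mul_one] at key
  have h1 : (Ms.card : ℝ) = (Ms ∩ M).card + (Ms \ M).card := by
    exact_mod_cast (Finset.card_inter_add_card_sdiff Ms M).symm
  have h2 : (M.card : ℝ) = (Ms ∩ M).card + (M \ Ms).card := by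
    rw [Finset.inter_comm]
    exact_mod_cast (Finset.card_inter_add_card_sdiff M Ms).symm
  have h3 := rho_ge (t + 1)
  have h4 : (0:ℝ) ≤ (Ms ∩ M).card := by positivity
  rw [h1, h2]
  nlinarith
end
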